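/- arXiv:1608.05162 — 8 statements merged into one kernel-verified Lean document; each statement's English description precedes it below -/
import Mathlib

section
/- Let R be a Noetherian normal domain containing a field of characteristic zero, and let M = ⊕_{i=0}^n M_i be a finitely generated reflexive R-module, decomposed into indecomposable summands, such that for every i one has Hom_R(M_i, M) ∈ add_R M or Hom_R(M_i, M) ∈ add_R M^*. Then R ∈ add_R M, i.e. M is a generator. -/
/-!
In characteristic zero `R` is a direct summand of `End_R(N)` for every nonzero finitely generated
torsion-free module `N` over the normal domain `R`. Over the fraction field `K` every
endomorphism of `N` has a trace (`endTrace`), which is integral over `R` by Cayley-Hamilton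
(`isIntegral_trace_of_isIntegral`) and hence lies in `R`, and the trace of the identity is the
rank of `N`, a nonzero integer, so a unit of `R`.

Taking `N` to be one summand `M i`, the ring `R` is a retract of `Hom_R(M i, M)`, thus of `M ^ k`
or of `(M^*) ^ k`. Either way, in the second case by reflexivity, this gives elements `m j` of `M`
and forms `φ j` on `M` with `∑ j, φ j (m j) = 1`, which is what it means for `M` to be a generator
(`isGeneratorModule_of_sum_eq_one`).
-/

/- ## Preliminary definitions -/

open Module TensorProduct CategoryTheory

universe u

section Defs

variable (R : Type u) [CommRing R]

/-- `N ∈ add_R M` : `N` is isomorphic to a direct summand of a finite direct sum of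
copies of `M`. -/
def MemAdd (M N : Type u) [AddCommGroup M] [Module R M] [AddCommGroup N] [Module R N] : Prop :=
  ∃ (k : ℕ) (P : ModuleCat.{u} R), Nonempty ((N × P) ≃ₗ[R] (Fin k → M))

/-- `M` is a generator, i.e. `R ∈ add_R M`. -/
def IsGeneratorModule (M : Type u) [AddCommGroup M] [Module R M] : Prop := MemAdd R M R

/-- `M` is an indecomposable module: it is nonzero and admits no nontrivial
direct sum decomposition. -/
def IsIndecomposableModule (M : Type u) [AddCommGroup M] [Module R M] : Prop :=
  Nontrivial M ∧ ∀ A B : Submodule R M, IsCompl A B → A = ⊥ ∨ B = ⊥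

/-- `M` is steady : `M` is a generator and `End_R(M) ∈ add_R M`. -/
def IsSteadyModule (M : Type u) [AddCommGroup M] [Module R M] : Prop :=
  IsGeneratorModule R M ∧ MemAdd R M (Module.End R M)

/-- The family `(M i)` (the indecomposable decomposition of `M = ⊕ i, M i`) is semi-steady:
`M` is a generator and, for each `i`, `Hom_R(M i, M) ∈ add_R M` or
`Hom_R(M i, M) ∈ add_R M^*`. -/
def IsSemiSteadyFamily {m : ℕ} (M : Fin m → Type u) [∀ i, AddCommGroup (M i)]
    [∀ i, Module R (M i)] : Prop :=
  IsGeneratorModule R (∀ j, M j) ∧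
  ∀ i, MemAdd R (∀ j, M j) (M i →ₗ[R] ∀ j, M j) ∨
       MemAdd R (Module.Dual R (∀ j, M j)) (M i →ₗ[R] ∀ j, M j)

/-- `M` has rank one: after tensoring with the fraction field of `R`, it becomes
one-dimensional. -/
def HasRankOne (M : Type u) [AddCommGroup M] [Module R M] : Prop :=
  Module.finrank (FractionRing R) (FractionRing R ⊗[R] M) = 1

/-- A divisorial module: a finitely generated rank-one reflexive module. -/
def IsDivisorialModule (M : Type u) [AddCommGroup M] [Module R M] : Prop :=
  Module.Finite R M ∧ Module.IsReflexive R M ∧ HasRankOne R M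

/-- The depth of a module over a (local) ring, defined as
`inf { i | Ext^i_R(R/m, M) ≠ 0 }`. -/
noncomputable def moduleDepth (hR : IsLocalRing R) (M : Type u) [AddCommGroup M]
    [Module R M] : ℕ∞ :=
  letI := hR
  sInf {i : ℕ∞ | ∃ k : ℕ, i = (k : ℕ∞) ∧
    ¬ Subsingleton ↥(((Ext R (ModuleCat.{u} R) k).obj
        (Opposite.op (ModuleCat.of R (IsLocalRing.ResidueField R)))).obj (ModuleCat.of R M))}

/-- `M` is a maximal Cohen-Macaulay module over the local ring `R`:
its depth equals (i.e. is at least) the Krull dimension of `R`. -/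
def IsMCM (M : Type u) [AddCommGroup M] [Module R M] : Prop :=
  ∀ hR : IsLocalRing R, ringKrullDim R ≤ (moduleDepth R hR M : WithBot ℕ∞)

end Defs

section GlobalDim

variable (Λ : Type u) [Ring Λ]

/-- The global dimension of the ring `Λ` is at most `d`, expressed via vanishing of
`Ext^{d+1}` on the category of `Λ`-modules. -/
def GlobalDimLE (d : ℕ) : Prop :=
  ∀ M N : ModuleCat.{u} Λ,
    Subsingleton ↥(((Ext ℤ (ModuleCat.{u} Λ) (d + 1)).obj (Opposite.op M)).obj N)

/-- The global dimension of the ring `Λ`. -/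
noncomputable def globalDim : ℕ∞ :=
  sInf {d : ℕ∞ | ∃ k : ℕ, d = (k : ℕ∞) ∧ GlobalDimLE Λ k}

end GlobalDim

section Order

variable (R : Type u) [CommRing R]

/-- `Λ` is a non-singular `R`-order: `Λ` is a module-finite `R`-algebra which is
maximal Cohen-Macaulay as an `R`-module, and `gl.dim Λ_p = dim R_p` for every
prime `p` of `R`. -/
def IsNonsingularOrder (Λ : Type u) [Ring Λ] [Algebra R Λ] : Prop :=
  Module.Finite R Λ ∧ IsMCM R Λ ∧
  ∀ p : PrimeSpectrum R,
    (globalDim (Localization.AtPrime p.asIdeal ⊗[R] Λ) : WithBot ℕ∞) =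
      ringKrullDim (Localization.AtPrime p.asIdeal)

/-- The nonzero finitely generated reflexive module `M` gives a non-commutative crepant
resolution (NCCR) of `R`, i.e. `End_R(M)` is a non-singular `R`-order. -/
def GivesNCCR (M : Type u) [AddCommGroup M] [Module R M] : Prop :=
  Module.Finite R M ∧ Module.IsReflexive R M ∧ Nontrivial M ∧
  IsNonsingularOrder R (Module.End R M)

end Order

/-- The forms `φ j` assemble to a map `M ^ k → R` split by `r ↦ (r • m j)`. -/
lemma isGeneratorModule_of_sum_eq_one {R : Type u} [CommRing R] {M : Type u} [AddCommGroup M]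
    [Module R M] {k : ℕ} (m : Fin k → M) (φ : Fin k → Module.Dual R M)
    (h : ∑ j, φ j (m j) = 1) : IsGeneratorModule R M := by
  let p : (Fin k → M) →ₗ[R] R := ∑ j, φ j ∘ₗ LinearMap.proj j
  let s : R →ₗ[R] (Fin k → M) := LinearMap.toSpanSingleton R _ m
  have hps : p ∘ₗ s = LinearMap.id := by
    ext
    simp [p, s, LinearMap.toSpanSingleton_apply, h]
  have e := lequivProdOfRightSplitExact (f := s) (j := (LinearMap.ker p).subtype) (g := p)
    (LinearMap.ker p).injective_subtype (by simp) hps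
  exact ⟨k, ModuleCat.of R (LinearMap.ker p), ⟨(LinearEquiv.prodComm R _ _).trans e⟩⟩

/-- If `R` is a retract of a module in `add_R X`, then the pairing between `X` and its dual
represents `1`. -/
lemma exists_sum_eq_one_of_retract {R : Type u} [CommRing R] {X N : Type u}
    [AddCommGroup X] [Module R X] [AddCommGroup N] [Module R N]
    (hN : MemAdd R X N) (x : N) (τ : N →ₗ[R] R) (hτ : τ x = 1) :
    ∃ (k : ℕ) (m : Fin k → X) (φ : Fin k → Module.Dual R X), ∑ j, φ j (m j) = 1 := by
  obtain ⟨k, P, ⟨e⟩⟩ := hN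
  let q : (Fin k → X) →ₗ[R] R := τ ∘ₗ LinearMap.fst R N P ∘ₗ e.symm.toLinearMap
  refine ⟨k, e (x, 0), fun j => q ∘ₗ LinearMap.single R (fun _ => X) j, ?_⟩
  have hq : q (e (x, 0)) = 1 := by simp [q, hτ]
  rw [← hq, ← LinearMap.sum_single_apply (fun _ => X) (e (x, 0)), map_sum]
  simp

/-- The trace is the sum of the eigenvalues in an algebraic closure, and each eigenvalue is a
root of every monic polynomial annihilating `f`. -/
lemma isIntegral_trace_of_isIntegral {R K V : Type*} [CommRing R] [Field K] [Algebra R K]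
    [AddCommGroup V] [Module K V] [FiniteDimensional K V] (f : Module.End K V)
    (hf : ∃ p : Polynomial R, p.Monic ∧ Polynomial.aeval f (p.map (algebraMap R K)) = 0) :
    IsIntegral R (LinearMap.trace K V f) := by
  obtain ⟨p, hp, hpf⟩ := hf
  let L := AlgebraicClosure K
  have hinj : Function.Injective (IsScalarTower.toAlgHom R K L) := (algebraMap K L).injective
  rw [← isIntegral_algHom_iff (IsScalarTower.toAlgHom R K L) hinj]
  let g : Module.End L (L ⊗[K] V) := f.baseChange L
  have htr : IsScalarTower.toAlgHom R K L (LinearMap.trace K V f) = LinearMap.trace L _ g :=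
    (LinearMap.trace_baseChange f L).symm
  have hpg : Polynomial.aeval g (p.map (algebraMap R L)) = 0 := by
    have h := congrArg (Module.End.baseChangeHom K L V) hpf
    rw [map_zero, ← Polynomial.aeval_algHom_apply] at h
    rw [IsScalarTower.algebraMap_eq R K L, ← Polynomial.map_map, Polynomial.aeval_map_algebraMap]
    exact h
  rw [htr, Module.End.trace_eq_sum_roots_charpoly_of_splits (IsAlgClosed.splits _)]
  refine IsIntegral.multiset_sum fun μ hμ => ⟨p, hp, ?_⟩
  have hev : g.HasEigenvalue μ := (Module.End.hasEigenvalue_iff_isRoot_charpoly g μ).2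
    (Polynomial.isRoot_of_mem_roots hμ)
  obtain ⟨v, hv⟩ := hev.exists_hasEigenvector
  have h := Module.End.aeval_apply_of_hasEigenvector (p := p.map (algebraMap R L)) hv
  rw [hpg, LinearMap.zero_apply, eq_comm, smul_eq_zero_iff_left hv.2] at h
  rwa [Polynomial.eval_map] at h

section EndTrace

variable (R N : Type*) [CommRing R] [IsDomain R] [AddCommGroup N] [Module R N]

/-- The `R`-linear map sending an endomorphism of `N` to the trace of its extension to
`Frac(R) ⊗ N`. -/
noncomputable def endTrace : Module.End R N →ₗ[R] FractionRing R :=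
  (LinearMap.trace (FractionRing R) (FractionRing R ⊗[R] N)).restrictScalars R ∘ₗ
    (Module.End.baseChangeHom R (FractionRing R) N).toLinearMap

lemma isIntegral_endTrace [Module.Finite R N] (f : Module.End R N) :
    IsIntegral R (endTrace R N f) := by
  refine isIntegral_trace_of_isIntegral _ ?_
  obtain ⟨p, hp, hpf⟩ := Algebra.IsIntegral.isIntegral (R := R) f
  refine ⟨p, hp, ?_⟩
  rw [Polynomial.aeval_map_algebraMap]
  change Polynomial.aeval (Module.End.baseChangeHom R (FractionRing R) N f) p = 0
  rw [Polynomial.aeval_algHom_apply, Polynomial.aeval_def, hpf, map_zero]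

/-- The identity has trace the rank of `N`, which is positive since `N` embeds into
`Frac(R) ⊗ N`. -/
lemma exists_endTrace_one [Module.Finite R N] [Module.IsTorsionFree R N] [Nontrivial N] :
    ∃ d : ℕ, d ≠ 0 ∧ endTrace R N 1 = d := by
  refine ⟨Module.finrank (FractionRing R) (FractionRing R ⊗[R] N), ?_, ?_⟩
  · have hinj : Function.Injective (TensorProduct.mk R (FractionRing R) N 1) := by
      rw [injective_iff_map_eq_zero]
      intro x hx
      obtain ⟨c, hc⟩ := (IsLocalizedModule.eq_zero_iff (nonZeroDivisors R) _).1 hx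
      exact (smul_eq_zero_iff_right (nonZeroDivisors.ne_zero c.2)).1 hc
    have := hinj.nontrivial
    exact Module.finrank_pos.ne'
  · simp [endTrace, LinearMap.trace_one]

/-- In characteristic zero `R` is a retract of `End_R(N)`, via the trace divided by the rank. -/
lemma exists_linearMap_end_one [IsIntegrallyClosed R] (k : Type*) [Field k] [CharZero k]
    [Algebra k R] [Module.Finite R N] [Module.IsTorsionFree R N] [Nontrivial N] :
    ∃ τ : Module.End R N →ₗ[R] R, τ 1 = 1 := by
  obtain ⟨d, hd, hd1⟩ := exists_endTrace_one R N
  have hinj := FaithfulSMul.algebraMap_injective R (FractionRing R)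
  let ι : R ≃ₗ[R] LinearMap.range (Algebra.linearMap R (FractionRing R)) :=
    LinearEquiv.ofInjective (Algebra.linearMap R (FractionRing R)) hinj
  let t : Module.End R N →ₗ[R] R := ι.symm.toLinearMap ∘ₗ
    (endTrace R N).codRestrict _ fun f => IsIntegrallyClosed.isIntegral_iff.1
      (isIntegral_endTrace R N f)
  have ht : t 1 = d := by
    apply hinj
    have h : ι (t 1) = ⟨endTrace R N 1, _⟩ := LinearEquiv.apply_symm_apply _ _
    have h' := congrArg Subtype.val h
    change algebraMap R (FractionRing R) (t 1) = _ at h'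
    exact h'.trans (hd1.trans (map_natCast (algebraMap R (FractionRing R)) d).symm)
  refine ⟨algebraMap k R (d : k)⁻¹ • t, ?_⟩
  rw [LinearMap.smul_apply, ht, smul_eq_mul, ← map_natCast (algebraMap k R), ← map_mul,
    inv_mul_cancel₀ (Nat.cast_ne_zero.2 hd), map_one]

end EndTrace

/-- Let `R` be a Noetherian normal domain containing a field of
characteristic zero, and let `M = ⊕_{i=0}^n M i` be a finitely generated reflexive
`R`-module, decomposed into indecomposable summands, such that for every `i` one has
`Hom_R(M i, M) ∈ add_R M` or `Hom_R(M i, M) ∈ add_R M^*`. Then `R ∈ add_R M`,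
i.e. `M` is a generator. -/
theorem generator_of_semisteady_condition_charZero
    (R : Type u) [CommRing R] [IsNoetherianRing R] [IsDomain R] [IsIntegrallyClosed R]
    (k : Type u) [Field k] [CharZero k] [Algebra k R]
    (n : ℕ) (M : Fin (n + 1) → Type u) [∀ i, AddCommGroup (M i)] [∀ i, Module R (M i)]
    [∀ i, Module.Finite R (M i)]
    (hrefl : Module.IsReflexive R (∀ i, M i))
    (hind : ∀ i, IsIndecomposableModule R (M i))
    (hhom : ∀ i, MemAdd R (∀ j, M j) (M i →ₗ[R] ∀ j, M j) ∨
      MemAdd R (Module.Dual R (∀ j, M j)) (M i →ₗ[R] ∀ j, M j)) :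
    IsGeneratorModule R (∀ i, M i) := by
  have htf : ∀ i, Module.IsTorsionFree R (M i) := fun i =>
    (Pi.single_injective i).moduleIsTorsionFree _ (LinearMap.single R M i).map_smul
  have := htf 0
  have := (hind 0).1
  obtain ⟨τ, hτ⟩ := exists_linearMap_end_one R (M 0) k
  -- `R → End_R(M 0) → Hom_R(M 0, M)` is split, since `M 0` is a summand of `M`.
  let x : M 0 →ₗ[R] ∀ j, M j := LinearMap.single R M 0
  let σ : (M 0 →ₗ[R] ∀ j, M j) →ₗ[R] R := τ ∘ₗ LinearMap.compRight R (LinearMap.proj 0)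
  have hσ : σ x = 1 := by
    rw [← hτ]
    change τ (LinearMap.proj 0 ∘ₗ LinearMap.single R M 0) = τ 1
    rw [LinearMap.proj_comp_single_same]
    rfl
  rcases hhom 0 with h | h
  · obtain ⟨l, m, φ, hs⟩ := exists_sum_eq_one_of_retract h x σ hσ
    exact isGeneratorModule_of_sum_eq_one m φ hs
  · obtain ⟨l, φ, ψ, hs⟩ := exists_sum_eq_one_of_retract h x σ hσ
    -- By reflexivity each form `ψ j` on `M^*` is evaluation at an element of `M`.
    refine isGeneratorModule_of_sum_eq_one (fun j => (Module.evalEquiv R _).symm (ψ j)) φ ?_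
    simpa using hs
end

section
/- Let R be a Noetherian normal domain and let M = ⊕_{i=0}^n M_i be a finitely generated reflexive R-module, decomposed into indecomposable summands, such that for every i one has Hom_R(M_i, M) ∈ add_R M or Hom_R(M_i, M) ∈ add_R M^*. If some direct summand of M is a rank-one reflexive R-module, then R ∈ add_R M, i.e. M is a generator. In particular, if M is splitting (a finite direct sum of rank-one reflexive modules), then M is a generator. -/
/-!
The proof goes through the trace ideal `tr M`, generated by all values `f m` of linear functionals
`f` on `M`. A finitely generated module is a generator exactly when `1 ∈ tr M`
(`isGeneratorModule_of_one_mem`), `tr X ⊆ tr M` whenever `X ∈ add M` (`MemAdd.apply_mem`), and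
`tr M^* = tr M` for reflexive `M` (`traceIdeal_dual_le`). Hence under the hypotheses every
functional on `Hom (M i, M)` takes values in `tr M`.

If `N` is a rank-one summand of `M`, an endomorphism of `N` acts on `K ⊗ N` as a scalar of the
fraction field `K`, which is integral over `R` by Cayley-Hamilton and so lies in `R` by normality.
This yields a functional `φ` on `End N` with `φ 1 = 1` (`exists_functional_end`). Writing `ι`, `π`
for the inclusion and projection of `N`, the functional `g ↦ φ (π ∘ g ∘ ι)` on
`End M = ⨁ i, Hom (M i, M)`
takes the value `1` at `ι ∘ π`, so `1` is a sum of values of functionals on the `Hom (M i, M)`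
and lies in `tr M`. The summand `N` need not be one of the `M i`, so no Krull-Schmidt property
is required.
-/

/- ## Preliminary definitions -/

open Module TensorProduct CategoryTheory

universe u

section Helpers

/-- The trace ideal of `M`: the ideal generated by all values of linear functionals on `M`. -/
def traceIdeal (R M : Type*) [CommRing R] [AddCommGroup M] [Module R M] : Ideal R :=
  Submodule.span R {r | ∃ (f : M →ₗ[R] R) (m : M), f m = r}

lemma apply_mem_traceIdeal {R M : Type*} [CommRing R] [AddCommGroup M] [Module R M]
    (f : M →ₗ[R] R) (m : M) : f m ∈ traceIdeal R M :=
  Submodule.subset_span ⟨f, m, rfl⟩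

lemma MemAdd.apply_mem {R : Type u} [CommRing R] {M N : Type u} [AddCommGroup M] [Module R M]
    [AddCommGroup N] [Module R N] (h : MemAdd R M N) (f : N →ₗ[R] R) (x : N) :
    f x ∈ traceIdeal R M := by
  obtain ⟨k, P, ⟨e⟩⟩ := h
  let f' : (Fin k → M) →ₗ[R] R := f ∘ₗ LinearMap.fst R N P ∘ₗ e.symm.toLinearMap
  have hx : f x = f' (e (x, 0)) := by simp [f']
  rw [hx, ← Finset.univ_sum_single (e (x, 0)), map_sum]
  exact Submodule.sum_mem _ fun i _ =>
    apply_mem_traceIdeal (f' ∘ₗ LinearMap.single R (fun _ => M) i) _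

lemma traceIdeal_dual_le {R M : Type*} [CommRing R] [AddCommGroup M] [Module R M]
    [Module.IsReflexive R M] : traceIdeal R (Module.Dual R M) ≤ traceIdeal R M := by
  refine Submodule.span_le.2 ?_
  rintro _ ⟨f, g, rfl⟩
  obtain ⟨m, rfl⟩ := (Module.bijective_dual_eval R M).2 f
  exact apply_mem_traceIdeal g m

/-- If `∑ f i (m i) = 1`, the map `M ^ k → R` with components `f i` is split by `1 ↦ m`, which
exhibits `R` as a direct summand of `M ^ k`. -/
lemma isGeneratorModule_of_one_mem {R : Type u} [CommRing R] {M : Type u} [AddCommGroup M]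
    [Module R M] (h : (1 : R) ∈ traceIdeal R M) : IsGeneratorModule R M := by
  obtain ⟨k, c, v, hv⟩ := Submodule.mem_span_set'.1 h
  choose f m hfm using fun i => (v i).2
  let g : (Fin k → M) →ₗ[R] R := ∑ i, c i • (f i ∘ₗ LinearMap.proj i)
  let s : R →ₗ[R] (Fin k → M) := LinearMap.toSpanSingleton R _ m
  have hgs : ∀ r, g (s r) = r := by
    intro r
    have h1 : g m = 1 := by simpa [g, hfm] using hv
    simp only [s, LinearMap.toSpanSingleton_apply, map_smul, h1, smul_eq_mul, mul_one]
  refine ⟨k, ModuleCat.of R (LinearMap.ker g), ⟨?_⟩⟩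
  refine LinearEquiv.ofBijective (s.coprod (LinearMap.ker g).subtype) ⟨?_, ?_⟩
  · rw [← LinearMap.ker_eq_bot, LinearMap.ker_eq_bot']
    rintro ⟨r, x, hx⟩ h0
    have h0' : s r + x = 0 := h0
    have hr : r = 0 := by
      have h1 := congrArg g h0'
      rwa [map_add, hgs, LinearMap.mem_ker.1 hx, add_zero, map_zero] at h1
    subst hr
    have hx0 : x = 0 := by simpa using h0'
    subst hx0
    rfl
  · intro y
    refine ⟨(g y, ⟨y - s (g y), ?_⟩), ?_⟩
    · rw [LinearMap.mem_ker, map_sub, hgs, sub_self]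
    · change s (g y) + (y - s (g y)) = y
      abel

/-- The functional sends `f` to the scalar by which `f` acts on the one-dimensional space `K ⊗ N`,
obtained as the trace of the base change of `f`. -/
lemma exists_functional_end {R : Type u} [CommRing R] [IsDomain R] [IsIntegrallyClosed R]
    {N : Type u} [AddCommGroup N] [Module R N] [Module.Finite R N] (h : HasRankOne R N) :
    ∃ φ : Module.End R N →ₗ[R] R, φ 1 = 1 := by
  let K := FractionRing R
  let V := K ⊗[R] N
  have hV : Module.finrank K V = 1 := h
  have : Nontrivial V := Module.nontrivial_of_finrank_pos (R := K) (by omega)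
  let b : Module.End R N →ₐ[R] Module.End K V := Module.End.baseChangeHom R K N
  let t : Module.End R N →ₗ[R] K :=
    (LinearMap.trace K V).restrictScalars R ∘ₗ b.toLinearMap
  have ht1 : t 1 = 1 := by
    change LinearMap.trace K V (b 1) = 1
    rw [map_one, LinearMap.trace_one, hV, Nat.cast_one]
  have ht : ∀ f, t f ∈ LinearMap.range (Algebra.linearMap R K) := by
    intro f
    obtain ⟨v, hv, hspan⟩ := finrank_eq_one_iff'.1 hV
    obtain ⟨c, hc⟩ := hspan (b f v)
    have hbf : b f = algebraMap K (Module.End K V) c := by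
      ext1
      ext n
      obtain ⟨d, hd⟩ := hspan (1 ⊗ₜ n)
      change b f (1 ⊗ₜ n) = c • (1 ⊗ₜ n)
      rw [← hd, map_smul, ← hc, smul_comm]
    have htf : t f = c := by
      change LinearMap.trace K V (b f) = c
      rw [hbf, Algebra.algebraMap_eq_smul_one, map_smul, LinearMap.trace_one, hV]
      simp
    have hint : IsIntegral R c := by
      have h1 : IsIntegral R (b f) := (Algebra.IsIntegral.isIntegral (R := R) f).map b
      rw [hbf] at h1
      exact (isIntegral_algebraMap_iff
        (FaithfulSMul.algebraMap_injective K (Module.End K V))).1 h1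
    rw [htf]
    obtain ⟨r, hr⟩ := IsIntegrallyClosed.isIntegral_iff.1 hint
    exact ⟨r, hr⟩
  have hinj : Function.Injective (Algebra.linearMap R K) := IsFractionRing.injective R K
  let e := LinearEquiv.ofInjective (Algebra.linearMap R K) hinj
  refine ⟨e.symm.toLinearMap ∘ₗ t.codRestrict _ ht, ?_⟩
  apply e.injective
  apply Subtype.ext
  change (e (e.symm (t.codRestrict _ ht 1)) : K) = Algebra.linearMap R K 1
  rw [e.apply_symm_apply]
  simp [ht1]

end Helpers

/-- Let `R` be a Noetherian normal domain and let `M = ⊕_{i=0}^n M i`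
be a finitely generated reflexive `R`-module, decomposed into indecomposable summands,
such that for every `i` one has `Hom_R(M i, M) ∈ add_R M` or
`Hom_R(M i, M) ∈ add_R M^*`. If some direct summand of `M` is a rank-one reflexive
`R`-module, then `R ∈ add_R M`, i.e. `M` is a generator. (In particular, if `M` is
splitting then `M` is a generator.) -/
theorem generator_of_semisteady_condition_of_rankOne_summand
    (R : Type u) [CommRing R] [IsNoetherianRing R] [IsDomain R] [IsIntegrallyClosed R]
    (n : ℕ) (M : Fin (n + 1) → Type u) [∀ i, AddCommGroup (M i)] [∀ i, Module R (M i)]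
    [∀ i, Module.Finite R (M i)]
    (hrefl : Module.IsReflexive R (∀ i, M i))
    (hind : ∀ i, IsIndecomposableModule R (M i))
    (hhom : ∀ i, MemAdd R (∀ j, M j) (M i →ₗ[R] ∀ j, M j) ∨
      MemAdd R (Module.Dual R (∀ j, M j)) (M i →ₗ[R] ∀ j, M j))
    (hsummand : ∃ N P : ModuleCat.{u} R, Nonempty ((∀ i, M i) ≃ₗ[R] (↥N × ↥P)) ∧
      Module.IsReflexive R ↥N ∧ HasRankOne R ↥N) :
    IsGeneratorModule R (∀ i, M i) := by
  obtain ⟨N, P, ⟨e⟩, -, hN⟩ := hsummand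
  let π : (∀ i, M i) →ₗ[R] N := LinearMap.fst R N P ∘ₗ e.toLinearMap
  let ι : N →ₗ[R] (∀ i, M i) := e.symm.toLinearMap ∘ₗ LinearMap.inl R N P
  have hπι : π ∘ₗ ι = LinearMap.id := by
    ext x
    simp [π, ι]
  have : Module.Finite R N :=
    Module.Finite.of_surjective π fun x => ⟨ι x, LinearMap.congr_fun hπι x⟩
  obtain ⟨φ, hφ⟩ := exists_functional_end hN
  -- `ψ i` is the restriction of `g ↦ φ (π ∘ g ∘ ι)` to the summand `Hom (M i, M)` of `End M`.
  let ψ : ∀ i, (M i →ₗ[R] ∀ j, M j) →ₗ[R] R := fun i =>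
    φ ∘ₗ LinearMap.llcomp R N (∀ j, M j) N π ∘ₗ LinearMap.lcomp R (∀ j, M j) (LinearMap.proj i ∘ₗ ι)
  have hψ : ∀ i g, ψ i g ∈ traceIdeal R (∀ j, M j) := by
    intro i g
    rcases hhom i with h | h
    · exact h.apply_mem _ _
    · exact traceIdeal_dual_le (h.apply_mem _ _)
  have hsum : ∑ i, ψ i (ι ∘ₗ π ∘ₗ LinearMap.single R M i) = 1 := by
    change ∑ i, φ (π ∘ₗ (ι ∘ₗ π ∘ₗ LinearMap.single R M i) ∘ₗ (LinearMap.proj i ∘ₗ ι)) = 1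
    rw [← map_sum, ← hφ]
    congr 1
    ext x
    have hdec : π (ι x) = ∑ i, π (Pi.single i (ι x i)) := by
      rw [← map_sum, Finset.univ_sum_single]
    have hid : ∀ y, π (ι y) = y := LinearMap.congr_fun hπι
    simp only [LinearMap.sum_apply, LinearMap.comp_apply, LinearMap.proj_apply,
      LinearMap.single_apply, hid, Module.End.one_apply]
    rw [← hdec, hid]
  refine isGeneratorModule_of_one_mem ?_
  rw [← hsum]
  exact Submodule.sum_mem _ fun i _ => hψ i _
end

section
/- Let R be a complete Noetherian local normal domain and let M be a finitely generated reflexive R-module with indecomposable decomposition M = ⊕_{i=0}^n M_i. Then M is steady if and only if M is semi-steady and add_R M = add_R M^*. -/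
/-!
Everything reduces to formal properties of `add`, seen as a relation on modules: `N ∈ add M` iff `N`
is a retract of a finite power of `M` (`memAdd_iff_retract`). In this form `add` is transitive, closed
under retracts and finite products, and preserved by `Hom(L, -)` and, contravariantly, by `Hom(-, L)`.

If `M` is steady, then `Hom(M i, M)` is a retract of `End M ∈ add M`, so `M` is semi-steady. Applying
`Hom(M, -)` to `R ∈ add M` gives `M^* ∈ add (End M)`, hence `M^* ∈ add M`; dualizing this and using
`M ≅ M^{**}` gives `M ∈ add M^*`. So `add M = add M^*`.

Conversely, if `add M = add M^*`, semi-steadiness puts every `Hom(M i, M)` in `add M`, hence also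
their product, which is `End M`. No Krull-Schmidt argument is needed.
-/

/- ## Preliminary definitions -/

open Module TensorProduct CategoryTheory

universe u

section AddClosure

variable {R : Type u} [CommRing R]
variable {L M N K : Type u} [AddCommGroup L] [Module R L] [AddCommGroup M] [Module R M]
  [AddCommGroup N] [Module R N] [AddCommGroup K] [Module R K]

/-- A retract of a power of `M` over any finite index type lies in `add M`; the complement is the
kernel of the retraction. -/
theorem memAdd_of_retract {ι : Type} [Finite ι] (i : N →ₗ[R] (ι → M)) (p : (ι → M) →ₗ[R] N)
    (h : ∀ x, p (i x) = x) : MemAdd R M N := by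
  obtain ⟨k, ⟨e⟩⟩ := Finite.exists_equiv_fin ι
  let q : (ι → M) →ₗ[R] LinearMap.ker p :=
    (LinearMap.id - i ∘ₗ p).codRestrict (LinearMap.ker p) fun x => by simp [h]
  let f : (N × LinearMap.ker p) ≃ₗ[R] (ι → M) :=
    LinearEquiv.ofLinearMap (i.coprod (LinearMap.ker p).subtype) (p.prod q)
      (LinearMap.ext fun x => by simp [q])
      (LinearMap.ext fun ⟨x, y, hy⟩ => by
        have hy' : p y = 0 := hy
        refine Prod.ext ?_ (Subtype.ext ?_) <;> simp [q, h, hy'])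
  exact ⟨k, ModuleCat.of R (LinearMap.ker p), ⟨f.trans (LinearEquiv.funCongrLeft R M e.symm)⟩⟩

/-- Membership in `add M` restated without choosing a complement; every closure property below is
proved in this form. -/
theorem memAdd_iff_retract : MemAdd R M N ↔
    ∃ (k : ℕ) (i : N →ₗ[R] (Fin k → M)) (p : (Fin k → M) →ₗ[R] N), ∀ x, p (i x) = x := by
  constructor
  · rintro ⟨k, P, ⟨e⟩⟩
    exact ⟨k, e.toLinearMap ∘ₗ LinearMap.inl R N P, LinearMap.fst R N P ∘ₗ e.symm.toLinearMap,
      fun x => by simp⟩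
  · rintro ⟨k, i, p, h⟩
    exact memAdd_of_retract i p h

/-- `add M` is closed under retracts. -/
theorem MemAdd.retract (hN : MemAdd R M N) (i : K →ₗ[R] N) (p : N →ₗ[R] K)
    (h : ∀ x, p (i x) = x) : MemAdd R M K := by
  obtain ⟨k, j, q, hq⟩ := memAdd_iff_retract.1 hN
  exact memAdd_of_retract (j ∘ₗ i) (p ∘ₗ q) fun x => by simp [h, hq]

theorem MemAdd.pi {ι : Type} [Finite ι] {N : ι → Type u} [∀ a, AddCommGroup (N a)]
    [∀ a, Module R (N a)] (h : ∀ a, MemAdd R M (N a)) : MemAdd R M (∀ a, N a) := by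
  choose k i p hp using fun a => memAdd_iff_retract.1 (h a)
  refine memAdd_of_retract (ι := Σ a, Fin (k a))
    (LinearMap.pi fun s => LinearMap.proj (φ := fun _ => M) s.2 ∘ₗ i s.1 ∘ₗ LinearMap.proj s.1)
    (LinearMap.pi fun a => p a ∘ₗ LinearMap.pi fun b => LinearMap.proj (⟨a, b⟩ : Σ a, Fin (k a)))
    fun x => funext fun a => hp a (x a)

theorem MemAdd.trans (hN : MemAdd R M N) (hM : MemAdd R L M) : MemAdd R L N := by
  obtain ⟨k, i, p, h⟩ := memAdd_iff_retract.1 hN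
  exact (MemAdd.pi fun _ : Fin k => hM).retract i p h

theorem MemAdd.hom_right (h : MemAdd R M N) : MemAdd R (L →ₗ[R] M) (L →ₗ[R] N) := by
  obtain ⟨k, i, p, hp⟩ := memAdd_iff_retract.1 h
  exact memAdd_of_retract
    (LinearMap.pi fun b => LinearMap.compRight R (LinearMap.proj b ∘ₗ i))
    (∑ b, LinearMap.compRight R (p ∘ₗ LinearMap.single R (fun _ => M) b) ∘ₗ LinearMap.proj b)
    fun f => by
      ext x
      simp only [LinearMap.sum_apply, LinearMap.comp_apply, LinearMap.compRight_apply,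
        LinearMap.proj_apply, LinearMap.pi_apply, ← map_sum,
        LinearMap.coe_single, Finset.univ_sum_single, hp]

theorem MemAdd.hom_left (h : MemAdd R M N) : MemAdd R (M →ₗ[R] L) (N →ₗ[R] L) := by
  obtain ⟨k, i, p, hp⟩ := memAdd_iff_retract.1 h
  let e : (Fin k → M →ₗ[R] L) ≃ₗ[R] ((Fin k → M) →ₗ[R] L) :=
    LinearMap.lsum R (fun _ : Fin k => M) R
  exact memAdd_of_retract (e.symm.toLinearMap ∘ₗ LinearMap.lcomp R L p)
    (LinearMap.lcomp R L i ∘ₗ e.toLinearMap) fun f => by ext x; simp [hp]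

end AddClosure

/-- Let `R` be a complete Noetherian local normal domain and let `M`
be a finitely generated reflexive `R`-module with indecomposable decomposition
`M = ⊕_{i=0}^n M i`. Then `M` is steady if and only if `M` is semi-steady and
`add_R M = add_R M^*`. -/
theorem steady_iff_semisteady_and_add_eq_add_dual
    (R : Type u) [CommRing R] [IsNoetherianRing R] [IsDomain R] [IsIntegrallyClosed R]
    [IsLocalRing R] [IsAdicComplete (IsLocalRing.maximalIdeal R) R]
    (n : ℕ) (M : Fin (n + 1) → Type u) [∀ i, AddCommGroup (M i)] [∀ i, Module R (M i)]
    [∀ i, Module.Finite R (M i)]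
    (hrefl : Module.IsReflexive R (∀ i, M i))
    (hind : ∀ i, IsIndecomposableModule R (M i)) :
    IsSteadyModule R (∀ i, M i) ↔
      IsSemiSteadyFamily R M ∧
        ∀ N : ModuleCat.{u} R,
          (MemAdd R (∀ i, M i) ↥N ↔ MemAdd R (Module.Dual R (∀ i, M i)) ↥N) := by
  constructor
  · rintro ⟨hgen, hend⟩
    refine ⟨⟨hgen, fun i => Or.inl ?_⟩, fun N => ?_⟩
    · exact hend.retract (LinearMap.lcomp R _ (LinearMap.proj i))
        (LinearMap.lcomp R _ (LinearMap.single R M i)) fun f => by ext x; simp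
    · have hdual : MemAdd R (∀ i, M i) (Module.Dual R (∀ i, M i)) :=
        (MemAdd.hom_right hgen).trans hend
      have hself : MemAdd R (Module.Dual R (∀ i, M i)) (∀ i, M i) :=
        (MemAdd.hom_left hdual).retract (Module.evalEquiv R (∀ i, M i)).toLinearMap
          (Module.evalEquiv R (∀ i, M i)).symm.toLinearMap (Module.evalEquiv R (∀ i, M i)).symm_apply_apply
      exact ⟨fun h => h.trans hself, fun h => h.trans hdual⟩
  · rintro ⟨⟨hgen, hsemi⟩, hadd⟩
    refine ⟨hgen, ?_⟩
    have hhom (i) : MemAdd R (∀ j, M j) (M i →ₗ[R] ∀ j, M j) :=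
      (hsemi i).elim id (hadd (ModuleCat.of R (M i →ₗ[R] ∀ j, M j))).2
    let e := LinearMap.lsum R M R (M := ∀ j, M j)
    exact (MemAdd.pi hhom).retract e.symm.toLinearMap e.toLinearMap fun f => by simp
end

section
/- Let R be a Noetherian normal domain. For any finitely generated reflexive R-modules M and N, there is an isomorphism of R-modules Hom_R(M, N)^* ≅ Hom_R(N, M). -/
/-! The isomorphism comes from the trace pairing `(g, f) ↦ tr (g ∘ f)` between `Hom(N, M)` and
`Hom(M, N)`, and is easiest to write in the other direction: a functional `φ` on `Hom(M, N)` gives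
`N → M**`, `n ↦ (ξ ↦ φ (x ↦ ξ x • n))`, and `M** ≅ M` because `M` is reflexive.

Injectivity holds because the homomorphisms `x ↦ ξ x • n` span `Hom(M, N)` up to torsion
(`exists_smul_eq_sum_dual`), while `R` is a domain. For surjectivity, `g : N → M` is the image of
`f ↦ tr (g ∘ f)`. This trace, a priori in the fraction field, lies in `R`
(`exists_trace_of_isIntegrallyClosed`): by Cayley–Hamilton an endomorphism of a finitely generated
module satisfies a monic equation over `R`, so its generic trace is a sum of integral eigenvalues,
hence integral, and `R` is normal.
-/

/- ## Preliminary definitions -/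

open Module TensorProduct CategoryTheory

universe u

/-- An endomorphism of a finite-dimensional space which is annihilated by a monic polynomial with
coefficients in `R` has a trace integral over `R`: over an algebraic closure, the trace is a sum of
eigenvalues, and each eigenvalue is a root of that polynomial. -/
lemma isIntegral_trace_of_aeval_eq_zero {R K V : Type*} [CommRing R] [Field K] [Algebra R K]
    [AddCommGroup V] [Module K V] [FiniteDimensional K V] (T : Module.End K V)
    (p : Polynomial R) (hp : p.Monic)
    (hT : Polynomial.aeval T (p.map (algebraMap R K)) = 0) :
    IsIntegral R (LinearMap.trace K V T) := by
  let L := AlgebraicClosure K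
  have hinj : Function.Injective (algebraMap K L) := (algebraMap K L).injective
  rw [← isIntegral_algebraMap_iff (A := K) (B := L) hinj]
  rw [← LinearMap.trace_baseChange]
  rw [Module.End.trace_eq_sum_roots_charpoly_of_splits (IsAlgClosed.splits _)]
  refine IsIntegral.multiset_sum fun μ hμ => ?_
  have hroot := Polynomial.isRoot_of_mem_roots hμ
  rw [← Module.End.hasEigenvalue_iff_isRoot_charpoly] at hroot
  obtain ⟨v, hv⟩ := hroot.exists_hasEigenvector
  have h0 : Polynomial.aeval (T.baseChange L)
      ((p.map (algebraMap R K)).map (algebraMap K L)) = 0 := by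
    have := Polynomial.aeval_algHom_apply (Module.End.baseChangeHom K L V) T
      (p.map (algebraMap R K))
    rw [hT, map_zero] at this
    rw [Polynomial.aeval_map_algebraMap]
    exact this
  have h1 := Module.End.aeval_apply_of_hasEigenvector
    (p := (p.map (algebraMap R K)).map (algebraMap K L)) hv
  rw [h0, LinearMap.zero_apply] at h1
  have h2 := (smul_eq_zero.mp h1.symm).resolve_right hv.2
  refine ⟨p, hp, ?_⟩
  rw [IsScalarTower.algebraMap_eq R K L, ← Polynomial.eval_map, ← Polynomial.map_map]
  exact h2

/-- Over a normal domain, endomorphisms of a finitely generated module have a trace in `R`, computed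
generically, which takes the expected value on endomorphisms of rank at most one. -/
lemma exists_trace_of_isIntegrallyClosed (R : Type*) [CommRing R] [IsDomain R]
    [IsIntegrallyClosed R] (M : Type*) [AddCommGroup M] [Module R M] [Module.Finite R M] :
    ∃ τ : Module.End R M →ₗ[R] R, ∀ (ξ : Module.Dual R M) (m : M), τ (ξ.smulRight m) = ξ m := by
  let K := FractionRing R
  let t : Module.End R M →ₗ[R] K :=
    ((LinearMap.trace K (K ⊗[R] M)).restrictScalars R) ∘ₗ LinearMap.baseChangeHom R K M M
  have hinj : Function.Injective (Algebra.linearMap R K) := IsFractionRing.injective R K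
  have ht : ∀ h, t h ∈ LinearMap.range (Algebra.linearMap R K) := by
    intro h
    obtain ⟨p, hp, hph⟩ := LinearMap.exists_monic_and_aeval_eq_zero R h
    have hint : IsIntegral R (t h) := by
      refine isIntegral_trace_of_aeval_eq_zero (K := K) _ p hp ?_
      have := Polynomial.aeval_algHom_apply (Module.End.baseChangeHom R K M) h p
      rw [hph, map_zero] at this
      rw [Polynomial.aeval_map_algebraMap]
      exact this
    obtain ⟨y, hy⟩ := IsIntegrallyClosed.isIntegral_iff.mp hint
    exact ⟨y, hy⟩
  let e := LinearEquiv.ofInjective _ hinj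
  refine ⟨e.symm.toLinearMap ∘ₗ t.codRestrict _ ht, fun ξ m => ?_⟩
  apply hinj
  have he : ∀ x, Algebra.linearMap R K (e.symm x) = x := fun x =>
    congrArg Subtype.val (e.apply_symm_apply x)
  refine (he _).trans ?_
  have hb : (ξ.smulRight m).baseChange K =
      (Module.Dual.baseChange K ξ).smulRight ((1 : K) ⊗ₜ[R] m) := by
    ext x
    simp [TensorProduct.smul_tmul', Algebra.smul_def]
  change LinearMap.trace K _ ((ξ.smulRight m).baseChange K) = _
  rw [hb, LinearMap.trace_smulRight]
  simp [Algebra.smul_def]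

/-- Up to a nonzero scalar, the identity of a finitely generated module over a domain is a sum of
endomorphisms of rank at most one. -/
lemma exists_smul_eq_sum_dual (R : Type*) [CommRing R] [IsDomain R]
    (M : Type u) [AddCommGroup M] [Module R M] [Module.Finite R M] :
    ∃ r : R, r ≠ 0 ∧ ∃ (ι : Type u) (_ : Fintype ι) (ξ : ι → Module.Dual R M) (m : ι → M),
      ∀ x : M, r • x = ∑ i, ξ i x • m i := by
  -- A maximal linearly independent set spans a free submodule `S` with `M ⧸ S` torsion; since `M`
  -- is finitely generated, a single `r ≠ 0` multiplies `M` into `S`.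
  obtain ⟨s, hs, hli⟩ := exists_set_linearIndependent_of_isDomain R M
  let S := Submodule.span R s
  have hsfin : s.Finite := by
    rw [← Cardinal.lt_aleph0_iff_set_finite, hs]
    exact Module.rank_lt_aleph0 R M
  have hrankS : Module.rank R S = Module.rank R M := by
    rw [← hs]; exact rank_span_set hli
  have hrank : Module.rank R (M ⧸ S) = 0 := by
    have h := rank_quotient_add_rank_of_isDomain S
    rw [hrankS] at h
    exact Cardinal.eq_of_add_eq_add_right (h.trans (zero_add _).symm) (Module.rank_lt_aleph0 R M)
  have htors : Module.IsTorsion R (M ⧸ S) := Module.rank_eq_zero_iff_isTorsion.mp hrank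
  obtain ⟨r, hr, hr0⟩ := (Submodule.annihilator_top_inter_nonZeroDivisors htors)
  have hrS : ∀ x : M, r • x ∈ S := fun x => by
    rw [← Submodule.Quotient.mk_eq_zero, Submodule.Quotient.mk_smul]
    exact Submodule.mem_annihilator.mp hr _ Submodule.mem_top
  let b : Module.Basis s R S := (Module.Basis.span hli).map
    (LinearEquiv.ofEq _ _ (by simp [S]))
  have hb : ∀ i, (b i : M) = i := fun i => 
    congrArg Subtype.val (Module.Basis.span_apply hli i)
  let ρ : M →ₗ[R] S := (LinearMap.lsmul R M r).codRestrict S hrS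
  refine ⟨r, nonZeroDivisors.ne_zero hr0, s, hsfin.fintype, fun i => b.coord i ∘ₗ ρ, fun i => i,
    fun x => ?_⟩
  let := hsfin.fintype
  have h := congrArg Subtype.val (b.sum_repr (ρ x))
  simp only [Submodule.coe_sum, Submodule.coe_smul, hb] at h
  exact h.symm

/-- Let `R` be a Noetherian normal domain. For any finitely generated
reflexive `R`-modules `M` and `N`, there is an isomorphism of `R`-modules
`Hom_R(M, N)^* ≅ Hom_R(N, M)`. -/
theorem dual_hom_iso_hom_swap
    (R : Type u) [CommRing R] [IsNoetherianRing R] [IsDomain R] [IsIntegrallyClosed R]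
    (M N : Type u) [AddCommGroup M] [Module R M] [AddCommGroup N] [Module R N]
    [Module.Finite R M] [Module.Finite R N]
    (hM : Module.IsReflexive R M) (hN : Module.IsReflexive R N) :
    Nonempty (Module.Dual R (M →ₗ[R] N) ≃ₗ[R] (N →ₗ[R] M)) := by
  -- `B n ξ` is the homomorphism `x ↦ ξ x • n`.
  let B : N →ₗ[R] Module.Dual R M →ₗ[R] (M →ₗ[R] N) := LinearMap.smulRightₗ.flip
  let Ψ : Module.Dual R (M →ₗ[R] N) →ₗ[R] (N →ₗ[R] Module.Dual R (Module.Dual R M)) :=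
    { toFun := fun φ => B.compr₂ φ
      map_add' := fun _ _ => rfl
      map_smul' := fun _ _ => rfl }
  have hΨ : Function.Bijective Ψ := by
    constructor
    · rw [injective_iff_map_eq_zero]
      intro φ hφ
      obtain ⟨r, hr, ι, _, ξ, m, hm⟩ := exists_smul_eq_sum_dual R M
      ext f
      have hf : r • f = ∑ i, B (f (m i)) (ξ i) := by
        ext x
        rw [LinearMap.smul_apply, ← map_smul, hm x, map_sum, LinearMap.sum_apply]
        exact Finset.sum_congr rfl fun i _ => map_smul f (ξ i x) (m i)
      have h : r • φ f = 0 := by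
        rw [← map_smul, hf, map_sum]
        exact Finset.sum_eq_zero fun i _ => LinearMap.congr_fun₂ hφ (f (m i)) (ξ i)
      exact (smul_eq_zero.mp h).resolve_left hr
    · intro g
      obtain ⟨τ, hτ⟩ := exists_trace_of_isIntegrallyClosed R M
      let e := Module.evalEquiv R M
      let g' : N →ₗ[R] M := e.symm.toLinearMap ∘ₗ g
      refine ⟨τ ∘ₗ LinearMap.compRight R g', ?_⟩
      ext n ξ
      have h1 : g' ∘ₗ ξ.smulRight n = ξ.smulRight (g' n) := by
        ext x
        simp
      have h2 : e (g' n) = g n := e.apply_symm_apply _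
      calc τ (g' ∘ₗ ξ.smulRight n) = ξ (g' n) := by rw [h1, hτ]
        _ = g n ξ := by rw [← h2]; rfl
  exact ⟨(LinearEquiv.ofBijective Ψ hΨ).trans
    (LinearEquiv.congrRight (Module.evalEquiv R M).symm)⟩
end

section
/- Let R be a Noetherian normal domain and let M = ⊕_{i=0}^n M_i be a finitely generated reflexive R-module decomposed into indecomposable summands. Then for each i, one has (Hom_R(M_i, M) ∈ add_R M or Hom_R(M_i, M) ∈ add_R M^*) if and only if (Hom_R(M, M_i) ∈ add_R M or Hom_R(M, M_i) ∈ add_R M^*). -/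
/-!
For reflexive finitely generated modules over a normal domain `R` there is a duality
`Hom(N, L)^* ≃ Hom(L, N)`. Applied with `{N, L} = {M i, M}`, it shows that each of `Hom(M i, M)`
and `Hom(M, M i)` is the dual of the other; since dualizing turns membership in `add M` into
membership in `add M^*` and conversely (`M` being reflexive), both implications follow.

The duality (`dualHomTo`) sends `φ` to the map `g : L → N^{**} = N` with
`ψ (g l) = φ (ψ(·) l)`, so it records the values of `φ` on the rank-one maps `ψ(·) l : N → L`.
It is injective because some nonzero multiple of any map `N → L` is a sum of rank-one maps
(`exists_factor`). It is surjective because `g : L → N` is the image of `f ↦ tr (g ∘ f)`, where the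
trace, computed over the fraction field, lies in `R` since it is integral over `R` (`trace_mem`).
-/


/- ## Preliminary definitions -/

open Module TensorProduct CategoryTheory

universe u

/-- The trace, over the fraction field, of an endomorphism of a finite module over an integrally
closed domain lies in the domain: over an algebraic closure it is a sum of eigenvalues, each of
which is a root of a monic polynomial over `R` annihilating the endomorphism. -/
theorem trace_mem (R : Type u) [CommRing R] [IsDomain R] [IsIntegrallyClosed R]
    (N : Type u) [AddCommGroup N] [Module R N] [Module.Finite R N] (f : Module.End R N) :
    ∃ r : R, algebraMap R (FractionRing R) r =
      LinearMap.trace (FractionRing R) _ (f.baseChange (FractionRing R)) := by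
  set K := FractionRing R
  obtain ⟨p, hp, hpf⟩ := LinearMap.exists_monic_and_aeval_eq_zero R f
  set F : Module.End K (K ⊗[R] N) := f.baseChange K with hF
  have hF0 : Polynomial.aeval F p = 0 := by
    have := congrArg (Module.End.baseChangeHom R K N) hpf
    rw [← Polynomial.aeval_algHom_apply, map_zero] at this
    exact this
  suffices IsIntegral R (LinearMap.trace K _ F) from IsIntegrallyClosed.isIntegral_iff.1 this
  let L := AlgebraicClosure K
  rw [← isIntegral_algebraMap_iff (algebraMap K L).injective, ← LinearMap.trace_baseChange]
  set G : Module.End L (L ⊗[K] (K ⊗[R] N)) := F.baseChange L with hG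
  have hG0 : Polynomial.aeval G (p.map (algebraMap R L)) = 0 := by
    have := congrArg (Module.End.baseChangeHom K L _) hF0
    rw [← Polynomial.aeval_map_algebraMap K, ← Polynomial.aeval_algHom_apply, map_zero,
      ← Polynomial.aeval_map_algebraMap L, Polynomial.map_map,
      ← IsScalarTower.algebraMap_eq] at this
    exact this
  rw [Module.End.trace_eq_sum_roots_charpoly_of_splits (IsAlgClosed.splits _)]
  refine IsIntegral.multiset_sum fun μ hμ => ⟨p, hp, ?_⟩
  have hμ' : G.HasEigenvalue μ := by
    rw [Module.End.hasEigenvalue_iff_isRoot_charpoly]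
    exact Polynomial.isRoot_of_mem_roots hμ
  obtain ⟨v, hv⟩ := hμ'.exists_hasEigenvector
  have h1 := Module.End.aeval_apply_of_hasEigenvector (p := p.map (algebraMap R L)) hv
  rw [hG0, LinearMap.zero_apply] at h1
  have := (smul_eq_zero.1 h1.symm).resolve_right hv.2
  rwa [Polynomial.eval_map] at this

/-- Some nonzero multiple of the identity of a finite module over a domain factors through a finite
free module, namely the span of a maximal linearly independent set of generators. -/
theorem exists_factor (R : Type u) [CommRing R] [IsDomain R]
    (N : Type u) [AddCommGroup N] [Module R N] [Module.Finite R N] :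
    ∃ (r : R) (k : ℕ) (ψ : Fin k → Dual R N) (v : Fin k → N), r ≠ 0 ∧
      ∀ x, r • x = ∑ i, ψ i x • v i := by
  classical
  obtain ⟨m, g, hg⟩ := Module.Finite.exists_fin (R := R) (M := N)
  obtain ⟨s, hs, hmax⟩ := exists_maximal_linearIndepOn R g
  have : ∀ i, ∃ a : R, a ≠ 0 ∧ a • g i ∈ Submodule.span R (g '' s) := fun i => by
    by_cases hi : i ∈ s
    · exact ⟨1, one_ne_zero, by
        simpa using Submodule.subset_span (Set.mem_image_of_mem g hi)⟩
    · exact hmax i hi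
  choose a ha0 ha using this
  have key : ∀ x : N, (∏ i, a i) • x ∈ Submodule.span R (Set.range fun i : s => g i) := by
    intro x
    have hx : x ∈ Submodule.span R (Set.range g) := hg ▸ Submodule.mem_top
    induction hx using Submodule.span_induction with
    | mem x h =>
      obtain ⟨i, rfl⟩ := h
      rw [← Finset.prod_erase_mul _ _ (Finset.mem_univ i), mul_smul, ← Set.image_eq_range]
      exact Submodule.smul_mem _ _ (ha i)
    | zero => simp
    | add x y _ _ hx hy => rw [smul_add]; exact add_mem hx hy
    | smul c x _ hx => rw [smul_comm]; exact Submodule.smul_mem _ _ hx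
  have hs' : LinearIndependent R fun i : s => g i := hs
  let T : N →ₗ[R] (s →₀ R) := hs'.repr ∘ₗ
    LinearMap.codRestrict _ (LinearMap.lsmul R N (∏ i, a i)) key
  let e := Fintype.equivFin s
  refine ⟨∏ i, a i, Fintype.card s, fun i => Finsupp.lapply (e.symm i) ∘ₗ T, fun i => g (e.symm i),
    Finset.prod_ne_zero_iff.2 fun i _ => ha0 i, fun x => ?_⟩
  have h := hs'.linearCombination_repr ⟨_, key x⟩
  rw [Finsupp.linearCombination_apply, Finsupp.sum_fintype _ _ (by simp)] at h
  rw [e.symm.sum_comp (fun i => (Finsupp.lapply i ∘ₗ T) x • g i)]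
  exact h.symm

section Duality

variable {R : Type u} [CommRing R] {N L : Type u} [AddCommGroup N] [Module R N]
  [AddCommGroup L] [Module R L]

/-- The natural map `Hom(N, L)^* → Hom(L, N)` for reflexive `N`. It sends `φ` and `l` to the element
of `N` corresponding to the functional `ψ ↦ φ (ψ(·) l)` in `N^{**}`. -/
noncomputable def dualHomTo [Module.IsReflexive R N] :
    Dual R (N →ₗ[R] L) →ₗ[R] (L →ₗ[R] N) :=
  LinearMap.mk₂ R (fun φ l => (evalEquiv R N).symm
      (φ ∘ₗ (LinearMap.smulRightₗ (R := R) (M := L) (M₂ := N)).flip l))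
    (fun φ φ' l => by rw [← map_add]; rfl)
    (fun c φ l => by rw [← map_smul]; rfl)
    (fun φ l l' => by rw [← map_add, map_add, LinearMap.comp_add])
    (fun c φ l => by rw [← map_smul, map_smul, LinearMap.comp_smul])

theorem apply_dualHomTo [Module.IsReflexive R N] (φ : Dual R (N →ₗ[R] L)) (ψ : Dual R N) (l : L) :
    ψ (dualHomTo φ l) = φ (ψ.smulRight l) := by
  simp [dualHomTo]

/-- Over an integrally closed domain, `Hom(N, L)^* ≃ Hom(L, N)` for finite reflexive `N`; nothing is
required of `L`. -/
theorem dualHomTo_bijective [IsDomain R] [IsIntegrallyClosed R] [Module.IsReflexive R N]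
    [Module.Finite R N] :
    Function.Bijective (dualHomTo (R := R) (N := N) (L := L)) := by
  constructor
  · refine (injective_iff_map_eq_zero _).2 fun φ hφ => ?_
    ext f
    obtain ⟨r, k, ψ, v, hr, h⟩ := exists_factor R N
    have hf : r • f = ∑ i, (ψ i).smulRight (f (v i)) := by
      ext x
      rw [LinearMap.smul_apply, ← map_smul, h, map_sum]
      simp
    have := congrArg φ hf
    simp_rw [map_smul, map_sum, ← apply_dualHomTo, hφ] at this
    simpa [hr] using this
  · intro g
    choose t ht using trace_mem R N
    have hinj := IsFractionRing.injective R (FractionRing R)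
    -- `t h` is the trace of `h` as an element of `R`, so the preimage of `g` is `f ↦ tr (g ∘ f)`.
    refine ⟨{ toFun := fun f => t (g ∘ₗ f), map_add' := ?_, map_smul' := ?_ }, ?_⟩
    · intro f f'
      apply hinj
      rw [map_add, ht, ht, ht, LinearMap.comp_add, LinearMap.baseChange_add, map_add]
    · intro c f
      apply hinj
      rw [RingHom.id_apply, smul_eq_mul, map_mul, ht, ht, LinearMap.comp_smul,
        LinearMap.baseChange_smul, ← Algebra.smul_def, ← algebraMap_smul (FractionRing R) c,
        map_smul, algebraMap_smul]
    · ext l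
      refine (bijective_dual_eval R N).1 (LinearMap.ext fun ψ => ?_)
      rw [Dual.eval_apply, Dual.eval_apply, apply_dualHomTo]
      apply hinj
      -- `g ∘ ψ(·) l` is the rank-one map `ψ(·) (g l)`, whose trace is `ψ (g l)`.
      change algebraMap R _ (t (g ∘ₗ ψ.smulRight l)) = _
      have : (g ∘ₗ ψ.smulRight l).baseChange (FractionRing R) =
          LinearMap.smulRight (Dual.baseChange (FractionRing R) ψ)
            ((1 : FractionRing R) ⊗ₜ[R] g l) := by
        ext x
        simp [TensorProduct.smul_tmul', TensorProduct.tmul_smul]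
      rw [ht, this, LinearMap.trace_smulRight]
      simp [Algebra.smul_def]

theorem MemAdd.dual {M N : Type u} [AddCommGroup M] [Module R M] [AddCommGroup N] [Module R N]
    (h : MemAdd R M N) : MemAdd R (Dual R M) (Dual R N) := by
  obtain ⟨k, P, ⟨e⟩⟩ := h
  exact ⟨k, ModuleCat.of R (Dual R P), ⟨(LinearMap.coprodEquiv R).trans
    (e.symm.dualMap.trans (LinearMap.lsum R (fun _ : Fin k => M) R).symm)⟩⟩

theorem MemAdd.congr {M M' N N' : Type u} [AddCommGroup M] [Module R M]
    [AddCommGroup N] [Module R N] [AddCommGroup M'] [Module R M'] [AddCommGroup N'] [Module R N']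
    (eM : M ≃ₗ[R] M') (eN : N ≃ₗ[R] N') (h : MemAdd R M N) : MemAdd R M' N' := by
  obtain ⟨k, P, ⟨e⟩⟩ := h
  exact ⟨k, P, ⟨(eN.symm.prodCongr (.refl R P)).trans
    (e.trans (LinearEquiv.piCongrRight fun _ => eM))⟩⟩

/-- If `B` is the dual of `A` and `M` is reflexive, the alternatives `A ∈ add M` and `A ∈ add M^*`
yield `B ∈ add M^*` and `B ∈ add M` respectively. -/
theorem memAdd_or_dual {M A B : Type u} [AddCommGroup M] [Module R M] [Module.IsReflexive R M]
    [AddCommGroup A] [Module R A] [AddCommGroup B] [Module R B] (e : Dual R A ≃ₗ[R] B)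
    (h : MemAdd R M A ∨ MemAdd R (Dual R M) A) : MemAdd R M B ∨ MemAdd R (Dual R M) B :=
  h.symm.imp (fun h => h.dual.congr (evalEquiv R M).symm e) (fun h => h.dual.congr (.refl R _) e)

end Duality

/-- Let `R` be a Noetherian normal domain and let `M = ⊕_{i=0}^n M i`
be a finitely generated reflexive `R`-module decomposed into indecomposable summands.
Then for each `i`, one has (`Hom_R(M i, M) ∈ add_R M` or `Hom_R(M i, M) ∈ add_R M^*`)
if and only if (`Hom_R(M, M i) ∈ add_R M` or `Hom_R(M, M i) ∈ add_R M^*`). -/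
theorem hom_into_mem_add_iff_hom_from_mem_add
    (R : Type u) [CommRing R] [IsNoetherianRing R] [IsDomain R] [IsIntegrallyClosed R]
    (n : ℕ) (M : Fin (n + 1) → Type u) [∀ i, AddCommGroup (M i)] [∀ i, Module R (M i)]
    [∀ i, Module.Finite R (M i)]
    (hrefl : Module.IsReflexive R (∀ i, M i))
    (hind : ∀ i, IsIndecomposableModule R (M i)) :
    ∀ i, (MemAdd R (∀ j, M j) (M i →ₗ[R] ∀ j, M j) ∨
            MemAdd R (Module.Dual R (∀ j, M j)) (M i →ₗ[R] ∀ j, M j)) ↔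
         (MemAdd R (∀ j, M j) ((∀ j, M j) →ₗ[R] M i) ∨
            MemAdd R (Module.Dual R (∀ j, M j)) ((∀ j, M j) →ₗ[R] M i)) := by
  intro i
  have : Module.IsReflexive R (M i) :=
    .of_split (LinearMap.single R M i) (LinearMap.proj i) (LinearMap.proj_comp_single_same R M i)
  exact ⟨memAdd_or_dual (.ofBijective dualHomTo dualHomTo_bijective),
    memAdd_or_dual (.ofBijective dualHomTo dualHomTo_bijective)⟩
end

section
/- Let R be a Noetherian normal domain and let M = ⊕_{i=0}^n M_i be a finitely generated reflexive semi-steady R-module. Then add_R End_R(M) = add_R (M ⊕ M^*), i.e. a finitely generated R-module lies in add_R End_R(M) if and only if it lies in add_R (M ⊕ M^*). -/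
/-!
Write `M = ⨁ i, M i`. Since `End_R(M) = ⨁ i, Hom_R(M i, M)`, semi-steadiness puts each summand, and
hence `End_R(M)`, in `add_R (M ⊕ M^*)`. Conversely, `R ∈ add_R M`; applying the additive functors
`Hom_R(-, M)` and `Hom_R(M, -)` gives `M = Hom_R(R, M) ∈ add_R End_R(M)` and
`M^* = Hom_R(M, R) ∈ add_R End_R(M)`. The two classes agree because `add_R` is closed under finite
sums and summands. Direct summands are handled throughout as retracts.
-/

/- ## Preliminary definitions -/

open Module TensorProduct CategoryTheory

universe u

section AddClosure

variable {R : Type u} [CommRing R]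
variable {A B C X : Type u} [AddCommGroup A] [Module R A] [AddCommGroup B] [Module R B]
  [AddCommGroup C] [Module R C] [AddCommGroup X] [Module R X]

/-- A retract of a finite power of `A` lies in `add_R A`: a split injection exhibits its source as a
direct summand. An arbitrary finite index type lets sums be reindexed freely. -/
theorem memAdd_of_retract_pi {ι : Type} [Finite ι] (f : B →ₗ[R] (ι → A)) (g : (ι → A) →ₗ[R] B)
    (h : ∀ b, g (f b) = b) : MemAdd R A B := by
  obtain ⟨k, ⟨e⟩⟩ := Finite.exists_equiv_fin ι
  -- The complement of `B` in `ι → A` is the kernel of the retraction.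
  have hker : ∀ y, (LinearMap.id - f ∘ₗ g : (ι → A) →ₗ[R] (ι → A)) y ∈ LinearMap.ker g :=
    fun y => by simp [h]
  let e' : (B × LinearMap.ker g) ≃ₗ[R] (ι → A) := LinearEquiv.ofLinearMap
    (f.coprod (LinearMap.ker g).subtype)
    (g.prod ((LinearMap.id - f ∘ₗ g).codRestrict (LinearMap.ker g) hker))
    (by ext1 y; simp)
    (by
      apply LinearMap.ext
      rintro ⟨b, p, hp⟩
      have hp' : g p = 0 := hp
      ext1
      · simp [h, hp']
      · apply Subtype.ext
        simp [h, hp'])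
  exact ⟨k, ModuleCat.of R (LinearMap.ker g), ⟨e'.trans (LinearEquiv.funCongrLeft R A e.symm)⟩⟩

theorem MemAdd.exists_retract (h : MemAdd R A B) :
    ∃ (k : ℕ) (f : B →ₗ[R] (Fin k → A)) (g : (Fin k → A) →ₗ[R] B), ∀ b, g (f b) = b := by
  obtain ⟨k, P, ⟨e⟩⟩ := h
  exact ⟨k, e.toLinearMap ∘ₗ LinearMap.inl R B P, LinearMap.fst R B P ∘ₗ e.symm.toLinearMap,
    by simp⟩

theorem MemAdd.of_retract (h : MemAdd R A B) (f : C →ₗ[R] B) (g : B →ₗ[R] C)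
    (hgf : ∀ c, g (f c) = c) : MemAdd R A C := by
  obtain ⟨k, f', g', h'⟩ := h.exists_retract
  exact memAdd_of_retract_pi (f' ∘ₗ f) (g ∘ₗ g') (by simp [h', hgf])

theorem MemAdd.of_equiv (h : MemAdd R A B) (e : B ≃ₗ[R] C) : MemAdd R A C :=
  h.of_retract e.symm.toLinearMap e.toLinearMap (by simp)

theorem memAdd_pi {m : ℕ} {B : Fin m → Type u} [∀ i, AddCommGroup (B i)] [∀ i, Module R (B i)]
    (h : ∀ i, MemAdd R A (B i)) : MemAdd R A (∀ i, B i) := by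
  choose k f g hfg using fun i => (h i).exists_retract
  refine memAdd_of_retract_pi (ι := Σ i, Fin (k i))
    (LinearMap.pi fun p => LinearMap.proj p.2 ∘ₗ f p.1 ∘ₗ LinearMap.proj p.1)
    (LinearMap.pi fun i => g i ∘ₗ LinearMap.pi fun j => LinearMap.proj ⟨i, j⟩) fun b => ?_
  funext i
  exact hfg i (b i)

theorem MemAdd.prod (hB : MemAdd R A B) (hC : MemAdd R A C) : MemAdd R A (B × C) := by
  obtain ⟨k, f, g, h⟩ := hB.exists_retract
  obtain ⟨l, f', g', h'⟩ := hC.exists_retract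
  refine memAdd_of_retract_pi (ι := Fin k ⊕ Fin l)
    ((LinearEquiv.sumArrowLequivProdArrow (Fin k) (Fin l) R A).symm.toLinearMap ∘ₗ f.prodMap f')
    (g.prodMap g' ∘ₗ (LinearEquiv.sumArrowLequivProdArrow (Fin k) (Fin l) R A).toLinearMap)
    fun b => ?_
  simp [h, h']

theorem MemAdd.trans_s6 (hB : MemAdd R A B) (hC : MemAdd R B C) : MemAdd R A C := by
  obtain ⟨k, f, g, h⟩ := hC.exists_retract
  exact (memAdd_pi fun _ : Fin k => hB).of_retract f g h

theorem memAdd_self : MemAdd R A A :=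
  memAdd_of_retract_pi (ι := Unit) (LinearMap.pi fun _ => LinearMap.id) (LinearMap.proj ())
    fun _ => rfl

theorem memAdd_prod_left : MemAdd R (A × B) A :=
  memAdd_self.of_retract (LinearMap.inl R A B) (LinearMap.fst R A B) fun _ => rfl

theorem memAdd_prod_right : MemAdd R (A × B) B :=
  memAdd_self.of_retract (LinearMap.inr R A B) (LinearMap.snd R A B) fun _ => rfl

/-- `Hom_R(X, -)` is additive, so it carries `add_R A` into `add_R Hom_R(X, A)`. -/
theorem MemAdd.hom_right_s6 (h : MemAdd R A B) : MemAdd R (X →ₗ[R] A) (X →ₗ[R] B) := by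
  obtain ⟨k, f, g, hfg⟩ := h.exists_retract
  refine (memAdd_pi fun _ : Fin k => memAdd_self (A := X →ₗ[R] A)).of_retract
    (LinearMap.pi fun j => LinearMap.llcomp R X B A (LinearMap.proj j ∘ₗ f))
    (LinearMap.llcomp R X (Fin k → A) B g ∘ₗ
      { toFun := LinearMap.pi, map_add' := fun _ _ => rfl, map_smul' := fun _ _ => rfl })
    fun u => ?_
  ext x
  exact hfg (u x)

/-- `Hom_R(-, X)` is additive, so it carries `add_R A` into `add_R Hom_R(A, X)`. -/
theorem MemAdd.hom_left_s6 (h : MemAdd R A B) : MemAdd R (A →ₗ[R] X) (B →ₗ[R] X) := by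
  obtain ⟨k, f, g, hfg⟩ := h.exists_retract
  refine (memAdd_pi fun _ : Fin k => memAdd_self (A := A →ₗ[R] X)).of_retract
    ((LinearMap.lsum R (fun _ : Fin k => A) R).symm.toLinearMap ∘ₗ LinearMap.lcomp R X g)
    (LinearMap.lcomp R X f ∘ₗ (LinearMap.lsum R (fun _ : Fin k => A) R).toLinearMap)
    fun u => ?_
  ext x
  simp only [LinearMap.comp_apply, LinearEquiv.coe_coe, LinearEquiv.apply_symm_apply,
    LinearMap.lcomp_apply, hfg]

end AddClosure

/-- Let `R` be a Noetherian normal domain and let `M = ⊕_{i=0}^n M i`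
be a finitely generated reflexive semi-steady `R`-module. Then
`add_R End_R(M) = add_R (M ⊕ M^*)`: a finitely generated `R`-module lies in
`add_R End_R(M)` if and only if it lies in `add_R (M ⊕ M^*)`. -/
theorem add_end_eq_add_self_prod_dual_of_semisteady
    (R : Type u) [CommRing R] [IsNoetherianRing R] [IsDomain R] [IsIntegrallyClosed R]
    (n : ℕ) (M : Fin (n + 1) → Type u) [∀ i, AddCommGroup (M i)] [∀ i, Module R (M i)]
    [∀ i, Module.Finite R (M i)]
    (hrefl : Module.IsReflexive R (∀ i, M i))
    (hind : ∀ i, IsIndecomposableModule R (M i))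
    (hss : IsSemiSteadyFamily R M) :
    ∀ N : ModuleCat.{u} R, Module.Finite R ↥N →
      (MemAdd R (Module.End R (∀ i, M i)) ↥N ↔
        MemAdd R ((∀ i, M i) × Module.Dual R (∀ i, M i)) ↥N) := by
  intro N _
  obtain ⟨hgen, hsum⟩ := hss
  have hEnd : MemAdd R ((∀ i, M i) × Module.Dual R (∀ i, M i)) (Module.End R (∀ i, M i)) :=
    (memAdd_pi fun i => (hsum i).elim memAdd_prod_left.trans_s6 memAdd_prod_right.trans_s6).of_equiv
      (LinearMap.lsum R M R)
  have hM : MemAdd R (Module.End R (∀ i, M i)) (∀ i, M i) :=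
    (MemAdd.hom_left_s6 hgen).of_equiv (LinearMap.ringLmapEquivSelf R R (∀ i, M i))
  have hDual : MemAdd R (Module.End R (∀ i, M i)) (Module.Dual R (∀ i, M i)) :=
    MemAdd.hom_right_s6 hgen
  exact ⟨hEnd.trans_s6, (hM.prod hDual).trans_s6⟩
end

section
/- Let R be a complete Noetherian local normal domain and let M = ⊕_{i=0}^n M_i be a basic finitely generated reflexive semi-steady R-module that is not steady, and assume that for every i the module Hom_R(M_i, M) is isomorphic either to M or to M^*. Set I := { i : Hom_R(M_i, M) ≅ M } and I^* := { i : Hom_R(M_i, M) ≅ M^* }. Then |I| = |I^*|. -/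
/-!
Comparing ranks in `Hom(M i, M) ≅ M` or `M^*` shows that every `M i` has rank one
(`finrank_hom`), so `M i` embeds in the fraction field. As `R` is normal, the endomorphism ring
of such a module is `R` (`EmbedsFrac.algebraMap_end_bijective`), which is local. Hence
multiplicities of rank-one summands are well defined (`card_iso_eq`). Composition
`Hom(B, A) × Hom(A, B) → End A = R` induces `Hom(B, A) ≅ Hom(A, B)^*` when `A` is reflexive
(`EmbedsFrac.hom_dual_equiv`), so `Hom(M i, M k)` and `Hom(M k, M i)` are dual to each other.

If the dual of every summand were again a summand, then `M^* ≅ M`, and `End M` would be a sum of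
copies of `M`, making `M` steady. So some `M j` has a dual that is not a summand of `M`.
Count the pairs `(i, k)` with `Hom(M i, M k) ≅ M j`: an index `i ∈ I` contributes one and an
index `i ∈ I^*` contributes none, so there are `|I|` of them. In the same way there are `|I^*|`
pairs with `Hom(M i, M k) ≅ (M j)^*`. The swap `(i, k) ↦ (k, i)` exchanges the two sets of
pairs by duality.
-/


/- ## Preliminary definitions -/

open Module TensorProduct CategoryTheory

universe u

/-! ### Duals of reflexive modules -/

section Reflexive

variable {R : Type u} [CommRing R] {A B : Type u} [AddCommGroup A] [Module R A]
  [AddCommGroup B] [Module R B]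

theorem nontrivial_dual [Module.IsReflexive R A] [Nontrivial A] : Nontrivial (Dual R A) := by
  by_contra h
  rw [not_nontrivial_iff_subsingleton] at h
  have := (Module.evalEquiv R A).injective.subsingleton
  exact not_subsingleton A this

theorem exists_dual_ne_zero [Module.IsReflexive R A] {a : A} (ha : a ≠ 0) :
    ∃ φ : Dual R A, φ a ≠ 0 := by
  by_contra! h
  exact ha ((Module.bijective_dual_eval R A).1 (by ext φ; simpa using h φ))

theorem nonempty_dual_congr_iff [Module.IsReflexive R A] [Module.IsReflexive R B] :
    Nonempty (Dual R A ≃ₗ[R] Dual R B) ↔ Nonempty (A ≃ₗ[R] B) :=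
  ⟨fun ⟨e⟩ => ⟨Module.evalEquiv R A ≪≫ₗ e.symm.dualMap ≪≫ₗ (Module.evalEquiv R B).symm⟩,
    fun ⟨e⟩ => ⟨e.symm.dualMap⟩⟩

theorem nonempty_dual_equiv_comm [Module.IsReflexive R A] [Module.IsReflexive R B] :
    Nonempty (Dual R A ≃ₗ[R] B) ↔ Nonempty (A ≃ₗ[R] Dual R B) :=
  ⟨fun ⟨e⟩ => ⟨Module.evalEquiv R A ≪≫ₗ e.symm.dualMap⟩,
    fun ⟨e⟩ => ⟨e.symm.dualMap ≪≫ₗ (Module.evalEquiv R B).symm⟩⟩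

end Reflexive

/-! ### Modules embedding in the fraction field -/

section RankOne
open nonZeroDivisors

variable {R : Type u} [CommRing R] [IsDomain R]

/-- `N` embeds in the fraction field of `R`, i.e. `N` is torsion-free of rank at most one.
The zero module is allowed; nontriviality is assumed separately where it matters. -/
def EmbedsFrac (R : Type u) [CommRing R] [IsDomain R] (N : Type u) [AddCommGroup N]
    [Module R N] : Prop :=
  ∃ ι : N →ₗ[R] FractionRing R, Function.Injective ι

variable {A B L X : Type u} [AddCommGroup A] [Module R A] [AddCommGroup B] [Module R B]
  [AddCommGroup L] [Module R L] [AddCommGroup X] [Module R X]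

theorem EmbedsFrac.isTorsionFree (h : EmbedsFrac R A) : Module.IsTorsionFree R A := by
  obtain ⟨ι, hι⟩ := h
  exact hι.moduleIsTorsionFree ι (fun r x => map_smul ι r x)

theorem EmbedsFrac.of_injective (h : EmbedsFrac R A) (f : B →ₗ[R] A) (hf : Function.Injective f) :
    EmbedsFrac R B := by
  obtain ⟨ι, hι⟩ := h
  exact ⟨ι ∘ₗ f, hι.comp hf⟩

theorem EmbedsFrac.exists_smul_eq (h : EmbedsFrac R A) (x : A) {y : A} (hy : y ≠ 0) :
    ∃ r s : R, s ≠ 0 ∧ s • x = r • y := by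
  obtain ⟨ι, hι⟩ := h
  have hy' : ι y ≠ 0 := fun h0 => hy (hι (by simpa using h0))
  obtain ⟨r, s, hs, hrs⟩ := IsFractionRing.div_surjective (A := R) (ι x / ι y)
  have hs0 : s ≠ 0 := nonZeroDivisors.ne_zero hs
  have hs' : algebraMap R (FractionRing R) s ≠ 0 := by simpa using hs0
  refine ⟨r, s, hs0, hι ?_⟩
  rw [map_smul, map_smul, Algebra.smul_def, Algebra.smul_def]
  field_simp at hrs
  linear_combination -hrs

/-- In rank one a nonzero map into a torsion-free module is injective, since any two nonzero
elements of the source are proportional up to nonzero multiples. -/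
theorem EmbedsFrac.map_injective (hA : EmbedsFrac R A) (hB : EmbedsFrac R B) {f : A →ₗ[R] B}
    (hf : f ≠ 0) : Function.Injective f := by
  have := hB.isTorsionFree
  rw [injective_iff_map_eq_zero]
  intro y hy
  by_contra hy0
  apply hf
  ext x
  obtain ⟨r, s, hs, hrs⟩ := hA.exists_smul_eq x hy0
  have h1 : s • f x = 0 := by rw [← map_smul, hrs, map_smul, hy, smul_zero]
  simpa [hs] using h1

theorem EmbedsFrac.hom [Nontrivial A] (hA : EmbedsFrac R A) (hB : EmbedsFrac R B) :
    EmbedsFrac R (A →ₗ[R] B) := by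
  obtain ⟨a, ha⟩ := exists_ne (0 : A)
  refine hB.of_injective (LinearMap.applyₗ a) ?_
  rw [injective_iff_map_eq_zero]
  intro f hf
  by_contra h0
  exact ha (hA.map_injective hB h0 (by simpa using hf))

theorem EmbedsFrac.dual_smul_comm (hA : EmbedsFrac R A) (φ : Dual R A) (a b : A) :
    φ a • b = φ b • a := by
  have := hA.isTorsionFree
  by_cases hb : b = 0
  · simp [hb]
  obtain ⟨r, s, hs, hrs⟩ := hA.exists_smul_eq a hb
  have h1 : s * φ a = r * φ b := by simpa using congrArg φ hrs
  apply smul_right_injective A hs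
  simp only [smul_smul]
  rw [h1, mul_comm s, mul_smul (φ b) s, hrs, smul_smul, mul_comm]

/-- An endomorphism is multiplication by an element of the fraction field that stabilizes a
nonzero finitely generated submodule, hence is integral over `R`, hence lies in `R`. -/
theorem EmbedsFrac.exists_eq_smul [IsIntegrallyClosed R] [Module.Finite R A] [Nontrivial A]
    (hA : EmbedsFrac R A) (f : A →ₗ[R] A) : ∃ r : R, ∀ a, f a = r • a := by
  have hA' := hA
  obtain ⟨ι, hι⟩ := hA
  obtain ⟨y, hy⟩ := exists_ne (0 : A)
  have hy' : ι y ≠ 0 := fun h0 => hy (hι (by simpa using h0))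
  set c := ι (f y) / ι y with hc
  have hmul : ∀ x, ι (f x) = c * ι x := by
    intro x
    obtain ⟨r, s, hs, hrs⟩ := hA'.exists_smul_eq x hy
    have hs' : algebraMap R (FractionRing R) s ≠ 0 := by simpa using hs
    have h1 := congrArg ι hrs
    have h2 := congrArg (fun z => ι (f z)) hrs
    simp only [map_smul, Algebra.smul_def] at h1 h2
    apply mul_left_cancel₀ hs'
    rw [h2, mul_left_comm, h1, hc]
    field_simp
  have hint : IsIntegral R c := by
    refine isIntegral_of_smul_mem_submodule (LinearMap.range ι) ?_ ?_ c ?_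
    · intro h0
      rw [LinearMap.range_eq_bot] at h0
      exact hy' (by rw [h0]; rfl)
    · rw [LinearMap.range_eq_map]
      exact (Module.Finite.fg_top).map ι
    · rintro _ ⟨x, rfl⟩
      exact ⟨f x, hmul x⟩
  obtain ⟨r, hr⟩ := IsIntegrallyClosed.isIntegral_iff.mp hint
  refine ⟨r, fun a => hι ?_⟩
  rw [hmul, map_smul, Algebra.smul_def, hr]

theorem EmbedsFrac.algebraMap_end_bijective [IsIntegrallyClosed R] [Module.Finite R A]
    [Nontrivial A] (hA : EmbedsFrac R A) :
    Function.Bijective (algebraMap R (Module.End R A)) := by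
  have := hA.isTorsionFree
  constructor
  · intro r s h
    obtain ⟨y, hy⟩ := exists_ne (0 : A)
    have := LinearMap.congr_fun h y
    simp only [Module.algebraMap_end_apply] at this
    exact smul_left_injective R hy this
  · intro f
    obtain ⟨r, hr⟩ := hA.exists_eq_smul f
    exact ⟨r, by ext a; simp [hr]⟩

/-- `Hom(B, A) ≅ Hom(A, B)^*` for `A` reflexive of rank one: a map `g : B → A` is sent to the
functional taking `f` to the scalar `g ∘ f ∈ End A = R`. Conversely a functional `l` gives
`B → A^{**} = A`, `b ↦ (φ ↦ l (φ(·) b))`. -/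
theorem EmbedsFrac.hom_dual_equiv [IsIntegrallyClosed R] [Module.Finite R A]
    [Nontrivial A] [Module.IsReflexive R A] (hA : EmbedsFrac R A) :
    Nonempty ((B →ₗ[R] A) ≃ₗ[R] Dual R (A →ₗ[R] B)) := by
  have htf := hA.isTorsionFree
  let e : R ≃ₗ[R] Module.End R A :=
    LinearEquiv.ofBijective (Algebra.linearMap R (Module.End R A)) hA.algebraMap_end_bijective
  have he : ∀ f a, e.symm f • a = f a := by
    intro f a
    conv_rhs => rw [← e.apply_symm_apply f]
    rfl
  let D : (B →ₗ[R] A) →ₗ[R] Dual R (A →ₗ[R] B) :=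
    (LinearMap.llcomp R A B A).compr₂ e.symm.toLinearMap
  have hD : ∀ g f a, D g f • a = g (f a) := fun g f a => he _ a
  refine ⟨LinearEquiv.ofBijective D ⟨?_, ?_⟩⟩
  · rw [injective_iff_map_eq_zero]
    intro g hg
    ext b
    obtain ⟨a, ha⟩ := exists_ne (0 : A)
    obtain ⟨φ, hφ⟩ := exists_dual_ne_zero (R := R) ha
    have h1 := (hD g (φ.smulRight b) a).symm
    rw [hg] at h1
    simpa [hφ] using h1
  · intro l
    let T : B →ₗ[R] Dual R (Dual R A) := (LinearMap.smulRightₗ (R := R) (M := B) (M₂ := A)).flip.compr₂ l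
    let g : B →ₗ[R] A := (Module.evalEquiv R A).symm.toLinearMap ∘ₗ T
    have hg : ∀ (φ : Dual R A) b, φ (g b) = l (φ.smulRight b) := by
      intro φ b
      change φ ((Module.evalEquiv R A).symm (T b)) = _
      rw [Module.apply_evalEquiv_symm_apply]
      rfl
    refine ⟨g, ?_⟩
    ext f
    obtain ⟨a, ha⟩ := exists_ne (0 : A)
    obtain ⟨φ, hφ⟩ := exists_dual_ne_zero (R := R) ha
    -- `φ(x) f(a) = f(φ(x) a) = f(φ(a) x)`, because `A` has rank one
    have h1 : φ.smulRight (f a) = φ a • f := by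
      ext x
      simp only [LinearMap.smulRight_apply, LinearMap.smul_apply, ← map_smul]
      rw [hA.dual_smul_comm]
    have h2 := congrArg φ (hD g f a)
    rw [hg, h1] at h2
    simp only [map_smul, smul_eq_mul] at h2
    exact mul_right_cancel₀ hφ (h2.trans (mul_comm _ _))

theorem embedsFrac_of_finrank_eq_one [Module.IsTorsionFree R A] (h : Module.finrank R A = 1) :
    EmbedsFrac R A := by
  have h1 : Module.finrank (FractionRing R) (LocalizedModule R⁰ A) = 1 := by
    rw [IsLocalization.finrank_eq (FractionRing R) R⁰ le_rfl,
      IsLocalizedModule.finrank_eq R⁰ (LocalizedModule.mkLinearMap R⁰ A) le_rfl, h]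
  have : Module.Finite (FractionRing R) (LocalizedModule R⁰ A) :=
    Module.finite_of_finrank_eq_succ h1
  let e : LocalizedModule R⁰ A ≃ₗ[FractionRing R] FractionRing R :=
    LinearEquiv.ofFinrankEq _ _ (by rw [h1, Module.finrank_self])
  refine ⟨(e.restrictScalars R).toLinearMap ∘ₗ LocalizedModule.mkLinearMap R⁰ A,
    e.injective.comp ?_⟩
  rw [injective_iff_map_eq_zero]
  intro a ha
  rw [IsLocalizedModule.eq_zero_iff R⁰] at ha
  obtain ⟨s, hs⟩ := ha
  have hs0 : (s : R) ≠ 0 := nonZeroDivisors.ne_zero s.2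
  have hs' : (s : R) • a = 0 := hs
  simpa [hs0] using hs'

/-- `Hom` out of a finitely presented module commutes with passing to the fraction field. -/
theorem finrank_hom [IsNoetherianRing R] [Module.Finite R A] [Module.Finite R B] :
    Module.finrank R (A →ₗ[R] B) = Module.finrank R A * Module.finrank R B := by
  have : Module.FinitePresentation R A := Module.finitePresentation_of_finite R A
  let K := FractionRing R
  let fA := LocalizedModule.mkLinearMap R⁰ A
  let fB := LocalizedModule.mkLinearMap R⁰ B
  have e : ∀ (N : Type u) [AddCommGroup N] [Module R N],
      Module.finrank K (LocalizedModule R⁰ N) = Module.finrank R N := by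
    intro N _ _
    rw [IsLocalization.finrank_eq (FractionRing R) R⁰ le_rfl,
      IsLocalizedModule.finrank_eq R⁰ (LocalizedModule.mkLinearMap R⁰ N) le_rfl]
  have h1 := IsLocalizedModule.finrank_eq R⁰ (IsLocalizedModule.mapExtendScalars R⁰ fA fB K) le_rfl
  rw [← h1, ← e A, ← e B, ← Module.finrank_linearMap K K,
    IsLocalization.finrank_eq K R⁰ le_rfl]



/-! ### Multiplicities of a rank-one summand -/

theorem EmbedsFrac.equiv_of_comp_bijective (hL : EmbedsFrac R L) (hX : EmbedsFrac R X)
    [Nontrivial X] (g : L →ₗ[R] X) (f : X →ₗ[R] L) (h : Function.Bijective (g ∘ₗ f)) :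
    Nonempty (L ≃ₗ[R] X) := by
  refine ⟨LinearEquiv.ofBijective g ⟨hL.map_injective hX ?_, Function.Surjective.of_comp h.2⟩⟩
  rintro rfl
  obtain ⟨x, hx⟩ := exists_ne (0 : X)
  exact hx (h.1 (by simp))

/-- The endomorphism ring of a rank-one module is `R`, so it has the residue field of `R` as a
quotient, with kernel the non-automorphisms. -/
theorem EmbedsFrac.exists_residue [IsIntegrallyClosed R] [IsLocalRing R] [Module.Finite R X]
    [Nontrivial X] (hX : EmbedsFrac R X) :
    ∃ s : Module.End R X →+* IsLocalRing.ResidueField R, ∀ f, s f ≠ 0 → Function.Bijective f := by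
  let e : R ≃+* Module.End R X :=
    RingEquiv.ofBijective (algebraMap R (Module.End R X)) hX.algebraMap_end_bijective
  refine ⟨(IsLocalRing.residue R).comp (e.symm : Module.End R X →+* R), fun f hf => ?_⟩
  rw [← Module.End.isUnit_iff]
  have h1 : IsUnit (e.symm f) := by
    exact (IsLocalRing.residue_ne_zero_iff_isUnit _).1 hf
  rw [← e.apply_symm_apply f]
  exact h1.map e

variable {κ μ : Type} [Fintype κ] [Fintype μ]
  {N : κ → Type u} [∀ k, AddCommGroup (N k)] [∀ k, Module R (N k)]
  {P : μ → Type u} [∀ k, AddCommGroup (P k)] [∀ k, Module R (P k)]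

/-- One half of the Krull–Schmidt property. Let `F k j : X → P j` and `G k j : P j → X` be the
components of `e` and of its inverse at the summands `N k ≅ X`. For fixed `k, k'` the composites
`G k j ∘ F k' j` sum over `j` to the identity or to zero, and only those with `P j ≅ X` survive
in the residue field. Thus an identity matrix indexed by `{k | N k ≅ X}` factors through the
index set `{j | P j ≅ X}`, and ranks give the inequality. -/
theorem card_iso_le [IsIntegrallyClosed R] [IsLocalRing R] [Module.Finite R X]
    [Nontrivial X] (hX : EmbedsFrac R X) (hP : ∀ j, EmbedsFrac R (P j))
    (e : (∀ k, N k) ≃ₗ[R] (∀ j, P j)) :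
    Nat.card {k // Nonempty (N k ≃ₗ[R] X)} ≤ Nat.card {j // Nonempty (P j ≃ₗ[R] X)} := by
  classical
  obtain ⟨s, hs⟩ := hX.exists_residue
  let α : ∀ k : {k // Nonempty (N k ≃ₗ[R] X)}, N k ≃ₗ[R] X := fun k => k.2.some
  let β : ∀ j : {j // Nonempty (P j ≃ₗ[R] X)}, P j ≃ₗ[R] X := fun j => j.2.some
  let F : ∀ k j, X →ₗ[R] P j := fun (k : {k // Nonempty (N k ≃ₗ[R] X)}) j =>
    LinearMap.proj j ∘ₗ e.toLinearMap ∘ₗ LinearMap.single R N k ∘ₗ (α k).symm.toLinearMap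
  let G : ∀ k j, P j →ₗ[R] X := fun (k : {k // Nonempty (N k ≃ₗ[R] X)}) j =>
    (α k).toLinearMap ∘ₗ LinearMap.proj k.1 ∘ₗ e.symm.toLinearMap ∘ₗ LinearMap.single R P j
  have hsum : ∀ k k', ∑ j, G k j ∘ₗ F k' j = if k = k' then LinearMap.id else 0 := by
    intro k k'
    ext x
    have h1 : ∑ j, LinearMap.single R P j (LinearMap.proj (R := R) j
        (e (LinearMap.single R N k' ((α k').symm x)))) =
        e (LinearMap.single R N k' ((α k').symm x)) := by
      simpa using LinearMap.sum_single_apply P _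
    have h2 : (∑ j, G k j ∘ₗ F k' j) x =
        α k (LinearMap.single R N k'.1 ((α k').symm x) k.1) := by
      simp only [LinearMap.sum_apply, G, F, LinearMap.comp_apply, LinearEquiv.coe_coe]
      rw [← map_sum, ← map_sum, ← map_sum, h1]
      simp
    rw [h2]
    split_ifs with h
    · subst h
      simp
    · have : k.1 ≠ k'.1 := fun hne => h (Subtype.ext hne)
      simp [Pi.single_eq_of_ne this]
  let Φ : Matrix {j // Nonempty (P j ≃ₗ[R] X)} {k // Nonempty (N k ≃ₗ[R] X)}
    (IsLocalRing.ResidueField R) := fun j k => s ((β j).toLinearMap ∘ₗ F k j)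
  let Ψ : Matrix {k // Nonempty (N k ≃ₗ[R] X)} {j // Nonempty (P j ≃ₗ[R] X)}
    (IsLocalRing.ResidueField R) := fun k j => s (G k j ∘ₗ (β j).symm.toLinearMap)
  have hΨΦ : Ψ * Φ = 1 := by
    ext k k'
    have h1 : ∀ j : {j // Nonempty (P j ≃ₗ[R] X)}, Ψ k j * Φ j k' = s (G k j ∘ₗ F k' j) := by
      intro j
      simp only [Ψ, Φ, ← map_mul]
      congr 1
      ext x
      simp
    have h2 : ∀ j, ¬ Nonempty (P j ≃ₗ[R] X) → s (G k j ∘ₗ F k' j) = 0 := by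
      intro j hj
      by_contra h0
      exact hj ((hP j).equiv_of_comp_bijective hX _ _ (hs _ h0))
    rw [Matrix.mul_apply, Finset.sum_congr rfl fun j _ => h1 j]
    have h3 : ∑ j : {j // Nonempty (P j ≃ₗ[R] X)}, s (G k j ∘ₗ F k' j) =
        ∑ j, s (G k j ∘ₗ F k' j) := by
      rw [← Finset.sum_subtype (Finset.univ.filter fun j => Nonempty (P j ≃ₗ[R] X)) (by simp)
        (fun j => s (G k j ∘ₗ F k' j))]
      refine Finset.sum_filter_of_ne fun j _ h => ?_
      by_contra hne
      exact h (h2 j hne)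
    rw [h3, ← map_sum, hsum, Matrix.one_apply]
    split_ifs
    · exact map_one s
    · exact map_zero s
  rw [Nat.card_eq_fintype_card, Nat.card_eq_fintype_card]
  calc _ = (1 : Matrix {k // Nonempty (N k ≃ₗ[R] X)} {k // Nonempty (N k ≃ₗ[R] X)}
        (IsLocalRing.ResidueField R)).rank := Matrix.rank_one.symm
    _ ≤ Φ.rank := hΨΦ ▸ Matrix.rank_mul_le_right Ψ Φ
    _ ≤ _ := Matrix.rank_le_card_height Φ

theorem card_iso_eq [IsIntegrallyClosed R] [IsLocalRing R] [Module.Finite R X]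
    [Nontrivial X] (hX : EmbedsFrac R X) (hN : ∀ k, EmbedsFrac R (N k))
    (hP : ∀ j, EmbedsFrac R (P j)) (e : (∀ k, N k) ≃ₗ[R] (∀ j, P j)) :
    Nat.card {k // Nonempty (N k ≃ₗ[R] X)} = Nat.card {j // Nonempty (P j ≃ₗ[R] X)} :=
  le_antisymm (card_iso_le hX hP e) (card_iso_le hX hN e.symm)


end RankOne

/-! ### Comparing the two index sets -/

theorem sum_card_eq_of_transpose {ι : Type} [Fintype ι] {p q : ι → ι → Prop}
    (h : ∀ i k, p i k ↔ q k i) :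
    ∑ i, Nat.card {k // p i k} = ∑ i, Nat.card {k // q i k} := by
  classical
  simp only [Nat.card_eq_fintype_card, Fintype.card_subtype, Finset.card_filter, h]
  exact Finset.sum_comm


/-- Let `R` be a complete Noetherian local normal domain and let
`M = ⊕_{i=0}^n M i` be a basic finitely generated reflexive semi-steady `R`-module that
is not steady, such that for every `i` the module `Hom_R(M i, M)` is isomorphic either
to `M` or to `M^*`. Set `I := { i | Hom_R(M i, M) ≅ M }` and
`I^* := { i | Hom_R(M i, M) ≅ M^* }`. Then `|I| = |I^*|`. -/
theorem card_I_eq_card_I_star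
    (R : Type u) [CommRing R] [IsNoetherianRing R] [IsDomain R] [IsIntegrallyClosed R]
    [IsLocalRing R] [IsAdicComplete (IsLocalRing.maximalIdeal R) R]
    (n : ℕ) (M : Fin (n + 1) → Type u) [∀ i, AddCommGroup (M i)] [∀ i, Module R (M i)]
    [∀ i, Module.Finite R (M i)]
    (hrefl : Module.IsReflexive R (∀ i, M i))
    (hind : ∀ i, IsIndecomposableModule R (M i))
    (hbasic : ∀ i j, i ≠ j → ¬ Nonempty (M i ≃ₗ[R] M j))
    (hss : IsSemiSteadyFamily R M)
    (hnotsteady : ¬ IsSteadyModule R (∀ i, M i))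
    (hiso : ∀ i, Nonempty ((M i →ₗ[R] ∀ j, M j) ≃ₗ[R] (∀ j, M j)) ∨
      Nonempty ((M i →ₗ[R] ∀ j, M j) ≃ₗ[R] Module.Dual R (∀ j, M j))) :
    Nat.card {i : Fin (n + 1) // Nonempty ((M i →ₗ[R] ∀ j, M j) ≃ₗ[R] (∀ j, M j))} =
      Nat.card {i : Fin (n + 1) //
        Nonempty ((M i →ₗ[R] ∀ j, M j) ≃ₗ[R] Module.Dual R (∀ j, M j))} := by
  classical
  have hnt : ∀ i, Nontrivial (M i) := fun i => (hind i).1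
  have hr : ∀ i, Module.IsReflexive R (M i) := fun i =>
    Module.IsReflexive.of_split (LinearMap.single R M i) (LinearMap.proj i)
      (LinearMap.proj_comp_single_same R M i)
  -- comparing ranks in `Hom(M i, M) ≅ M` or `M^*` shows that every `M i` has rank one
  have hpos : 0 < Module.finrank R (∀ j, M j) := Module.finrank_pos_iff.2 inferInstance
  have hrank : ∀ i, Module.finrank R (M i) = 1 := by
    intro i
    have h1 : Module.finrank R (M i →ₗ[R] ∀ j, M j) = Module.finrank R (∀ j, M j) := by
      rcases hiso i with ⟨⟨e⟩⟩ | ⟨⟨e⟩⟩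
      · exact e.finrank_eq
      · rw [e.finrank_eq]
        exact (finrank_hom (R := R)).trans (by simp)
    rw [finrank_hom] at h1
    exact Nat.eq_of_mul_eq_mul_right hpos (by rw [h1, one_mul])
  have hE : ∀ i, EmbedsFrac R (M i) := fun i => embedsFrac_of_finrank_eq_one (hrank i)
  have hER : EmbedsFrac R R :=
    ⟨Algebra.linearMap R (FractionRing R), IsFractionRing.injective R (FractionRing R)⟩
  have hED : ∀ i, EmbedsFrac R (Dual R (M i)) := fun i => (hE i).hom hER
  have hH : ∀ i k, EmbedsFrac R (M i →ₗ[R] M k) := fun i k => (hE i).hom (hE k)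
  let eD : Dual R (∀ j, M j) ≃ₗ[R] ∀ j, Dual R (M j) := (LinearMap.lsum R M R).symm
  let eH : ∀ i, (M i →ₗ[R] ∀ j, M j) ≃ₗ[R] ∀ j, (M i →ₗ[R] M j) := fun i =>
    (LinearEquiv.linearMapPi R).symm
  -- otherwise duality would permute the summands, so `M^* ≅ M` and `M` would be steady
  obtain ⟨j, hj⟩ : ∃ j, ∀ k, ¬ Nonempty (M k ≃ₗ[R] Dual R (M j)) := by
    by_contra! hcon
    choose σ hσ using hcon
    have hinj : Function.Injective σ := by
      intro a b hab
      by_contra hne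
      have h1 := hσ a
      rw [hab] at h1
      exact hbasic a b hne
        (nonempty_dual_congr_iff.1 ⟨h1.some.symm ≪≫ₗ (hσ b).some⟩)
    let τ := Equiv.ofBijective σ (Finite.injective_iff_bijective.1 hinj)
    let e : Dual R (∀ j, M j) ≃ₗ[R] ∀ j, M j :=
      eD ≪≫ₗ LinearEquiv.piCongrRight (fun j => (hσ j).some.symm) ≪≫ₗ
        LinearEquiv.piCongrLeft R M τ
    have hall : ∀ i, Nonempty ((M i →ₗ[R] ∀ j, M j) ≃ₗ[R] (∀ j, M j)) := fun i =>
      (hiso i).elim id fun ⟨f⟩ => ⟨f ≪≫ₗ e⟩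
    refine hnotsteady ⟨hss.1, n + 1, ModuleCat.of R PUnit, ⟨?_⟩⟩
    exact LinearEquiv.prodUnique ≪≫ₗ (LinearMap.lsum R M R).symm ≪≫ₗ
      LinearEquiv.piCongrRight fun i => (hall i).some
  have hone : Nat.card {k // Nonempty (M k ≃ₗ[R] M j)} = 1 := by
    rw [Nat.card_eq_one_iff_unique]
    refine ⟨⟨fun a b => Subtype.ext ?_⟩, ⟨⟨j, ⟨LinearEquiv.refl R _⟩⟩⟩⟩
    by_contra hne
    exact hbasic _ _ hne ⟨a.2.some ≪≫ₗ b.2.some.symm⟩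
  have hone' : Nat.card {k // Nonempty (Dual R (M k) ≃ₗ[R] Dual R (M j))} = 1 := by
    simpa only [nonempty_dual_congr_iff] using hone
  have hzero : Nat.card {k // Nonempty (M k ≃ₗ[R] Dual R (M j))} = 0 := by
    have : IsEmpty {k // Nonempty (M k ≃ₗ[R] Dual R (M j))} := ⟨fun k => hj k.1 k.2⟩
    exact Nat.card_of_isEmpty
  have hzero' : Nat.card {k // Nonempty (Dual R (M k) ≃ₗ[R] M j)} = 0 := by
    simpa only [nonempty_dual_equiv_comm] using hzero
  have hntD : Nontrivial (Dual R (M j)) := nontrivial_dual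
  have hA : ∀ i, Nonempty ((M i →ₗ[R] ∀ j, M j) ≃ₗ[R] (∀ j, M j)) →
      Nat.card {k // Nonempty ((M i →ₗ[R] M k) ≃ₗ[R] M j)} = 1 ∧
      Nat.card {k // Nonempty ((M i →ₗ[R] M k) ≃ₗ[R] Dual R (M j))} = 0 := by
    rintro i ⟨f⟩
    have g := (eH i).symm ≪≫ₗ f
    exact ⟨(card_iso_eq (hE j) (hH i) hE g).trans hone,
      (card_iso_eq (hED j) (hH i) hE g).trans hzero⟩
  have hB : ∀ i, Nonempty ((M i →ₗ[R] ∀ j, M j) ≃ₗ[R] Dual R (∀ j, M j)) →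
      Nat.card {k // Nonempty ((M i →ₗ[R] M k) ≃ₗ[R] M j)} = 0 ∧
      Nat.card {k // Nonempty ((M i →ₗ[R] M k) ≃ₗ[R] Dual R (M j))} = 1 := by
    rintro i ⟨f⟩
    have g := (eH i).symm ≪≫ₗ f ≪≫ₗ eD
    exact ⟨(card_iso_eq (hE j) (hH i) hED g).trans hzero',
      (card_iso_eq (hED j) (hH i) hED g).trans hone'⟩
  -- `Hom(M i, M k)` and `Hom(M k, M i)` are dual to each other
  have hdual : ∀ i k, Nonempty ((M i →ₗ[R] M k) ≃ₗ[R] M j) ↔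
      Nonempty ((M k →ₗ[R] M i) ≃ₗ[R] Dual R (M j)) := by
    intro i k
    obtain ⟨d⟩ := (hE i).hom_dual_equiv (B := M k)
    obtain ⟨dk⟩ := (hE k).hom_dual_equiv (B := M i)
    exact ⟨fun ⟨e⟩ => ⟨d ≪≫ₗ e.symm.dualMap⟩,
      fun ⟨e⟩ => ⟨dk ≪≫ₗ e.symm.dualMap ≪≫ₗ (Module.evalEquiv R (M j)).symm⟩⟩
  have hsumA : Nat.card {i // Nonempty ((M i →ₗ[R] ∀ j, M j) ≃ₗ[R] (∀ j, M j))} =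
      ∑ i, Nat.card {k // Nonempty ((M i →ₗ[R] M k) ≃ₗ[R] M j)} := by
    rw [Nat.card_eq_fintype_card, Fintype.card_subtype, Finset.card_filter]
    refine Finset.sum_congr rfl fun i _ => ?_
    split_ifs with h
    · exact (hA i h).1.symm
    · exact (hB i ((hiso i).resolve_left h)).1.symm
  have hsumB : Nat.card {i // Nonempty ((M i →ₗ[R] ∀ j, M j) ≃ₗ[R] Dual R (∀ j, M j))} =
      ∑ i, Nat.card {k // Nonempty ((M i →ₗ[R] M k) ≃ₗ[R] Dual R (M j))} := by
    rw [Nat.card_eq_fintype_card, Fintype.card_subtype, Finset.card_filter]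
    refine Finset.sum_congr rfl fun i _ => ?_
    split_ifs with h
    · exact (hB i h).2.symm
    · exact (hA i ((hiso i).resolve_right h)).2.symm
  rw [hsumA, hsumB]
  exact sum_card_eq_of_transpose hdual
end

section
/- Let R be a complete Noetherian local normal domain and let M = ⊕_{i=0}^n M_i be a basic finitely generated reflexive semi-steady R-module that is not steady, and assume that for every i the module Hom_R(M_i, M) is isomorphic either to M or to M^*. Then n + 1 (the number of indecomposable direct summands of M) is an even number. -/
/-!
Comparing ranks in `Hom(M i, M) ≅ M` or `M^*` gives `rk (M i) * rk M = rk M`, so every `M i` is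
reflexive of rank one (`finrank_hom`), i.e. isomorphic to a divisorial fractional ideal `I i`
(`exists_embedding`, `IsFrac.one_div_one_div`). As `R` is normal, such an ideal has the local ring
`R` as its endomorphism ring, which gives the exchange property `exists_proportional`. Writing
`c i` for the class of `I i` in the divisor class group, `Hom(M i, M j)` and `M j ^*` have classes
`c j / c i` and `(c j)⁻¹`. So for the finite set `S = {c i}`, of cardinality `n + 1` because `M`
is basic, every `s ∈ S` satisfies `s⁻¹ S = S` or `s⁻¹ S = S⁻¹`. If `S = S⁻¹` then `M ≅ M^*` and
`M` is steady (`isSteadyModule_of_equiv_dual`); hence `S ≠ S⁻¹`, the two alternatives exclude each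
other, and for any `b ∈ S` of the second kind (one exists, as otherwise `S⁻¹ = S`) the involution
`s ↦ b / s` of `S` exchanges the elements of the two kinds. So `|S|` is even
(`even_card_of_translates`).

The class group is encoded as units of the monoid of `R`-submodules of the fraction field modulo
the relation that `1 / I` and `1 / J` are proportional (`artinCon`). Mapping `I` to `1 / I` turns
products into colons, so this is a congruence, and `I * (1 / I) ∼ 1` is complete integral
closedness of `R`.
-/


/- ## Preliminary definitions -/

open Module TensorProduct CategoryTheory

universe u

set_option linter.unusedSectionVars false

/-! ### Finite subsets of an abelian group -/

open scoped Pointwise in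
/-- Let `S` be a finite subset of an abelian group with `s⁻¹ S = S` or `s⁻¹ S = S⁻¹` for every
`s ∈ S`, and `S ≠ S⁻¹`. Then `|S|` is even: for `b ∈ S` of the second kind, `s ↦ b / s` exchanges
the elements of the two kinds. The set `S` is given as the range of an injective family `c`. -/
lemma even_card_of_translates {G : Type*} [CommGroup G] {m : ℕ} (c : Fin m → G)
    (hc : Function.Injective c)
    (h : ∀ i, (∀ j, ∃ k, c j * (c i)⁻¹ = c k) ∨ (∀ j, ∃ k, c j * (c i)⁻¹ = (c k)⁻¹))
    (hn : ¬ ∀ j, ∃ k, (c j)⁻¹ = c k) : Even m := by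
  classical
  set S : Finset G := Finset.univ.image c with hS
  have hcard : S.card = m := by
    rw [hS, Finset.card_image_of_injective _ hc, Finset.card_univ, Fintype.card_fin]
  have key : ∀ s ∈ S, s⁻¹ • S = S ∨ s⁻¹ • S = S⁻¹ := by
    intro s hs
    obtain ⟨i, -, rfl⟩ := Finset.mem_image.1 hs
    rcases h i with h | h
    · left
      apply Finset.eq_of_subset_of_card_le
      · intro x hx
        obtain ⟨y, hy, rfl⟩ := Finset.mem_smul_finset.1 hx
        obtain ⟨j, -, rfl⟩ := Finset.mem_image.1 hy
        obtain ⟨k, hk⟩ := h j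
        rw [smul_eq_mul, mul_comm, hk]
        simp [hS]
      · rw [Finset.card_smul_finset]
    · right
      apply Finset.eq_of_subset_of_card_le
      · intro x hx
        obtain ⟨y, hy, rfl⟩ := Finset.mem_smul_finset.1 hx
        obtain ⟨j, -, rfl⟩ := Finset.mem_image.1 hy
        obtain ⟨k, hk⟩ := h j
        rw [smul_eq_mul, mul_comm, hk]
        simp [hS]
      · rw [Finset.card_smul_finset, Finset.card_inv]
  have hne : S ≠ S⁻¹ := by
    intro heq
    apply hn
    intro j
    have h1 : (c j)⁻¹ ∈ S := by
      rw [heq]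
      exact Finset.inv_mem_inv (by simp [hS])
    obtain ⟨k, -, hk⟩ := Finset.mem_image.1 h1
    exact ⟨k, hk.symm⟩
  have hone : ∀ s ∈ S, (1 : G) ∈ s⁻¹ • S := fun s hs =>
    Finset.mem_smul_finset.2 ⟨s, hs, by simp⟩
  -- `1 = s⁻¹ * s` lies in `S` or in `S⁻¹`, hence in `S`.
  have hone_mem : m ≠ 0 → (1 : G) ∈ S := by
    intro hm
    have h0 : c ⟨0, Nat.pos_of_ne_zero hm⟩ ∈ S := by simp [hS]
    have h1 := hone _ h0
    rcases key _ h0 with h2 | h2 <;> rw [h2] at h1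
    · exact h1
    · simpa using h1
  have hinv : ∀ s : G, s • S⁻¹ = (s⁻¹ • S)⁻¹ := by
    intro s
    ext x
    rw [← Finset.inv_smul_mem_iff, Finset.mem_inv', Finset.mem_inv', ← Finset.inv_smul_mem_iff]
    simp [mul_comm]
  by_cases hB : ∃ b ∈ S, b⁻¹ • S = S⁻¹
  · obtain ⟨b, hbS, hb⟩ := hB
    set A := S.filter (fun s => s⁻¹ • S = S) with hA
    set B := S.filter (fun s => s⁻¹ • S = S⁻¹) with hBdef
    have hm0 : m ≠ 0 := by
      rintro rfl
      simp [hS] at hbS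
    have hsum : A.card + B.card = m := by
      rw [← hcard, ← Finset.card_union_of_disjoint]
      · congr 1
        ext s
        simp only [hA, hBdef, Finset.mem_union, Finset.mem_filter]
        constructor
        · rintro (h | h) <;> exact h.1
        · intro hs
          rcases key s hs with h | h
          · exact Or.inl ⟨hs, h⟩
          · exact Or.inr ⟨hs, h⟩
      · rw [Finset.disjoint_left]
        intro s h1 h2
        exact hne ((Finset.mem_filter.1 h1).2.symm.trans (Finset.mem_filter.1 h2).2)
    have hdiv : ∀ s : G, (b * s⁻¹)⁻¹ • S = (s⁻¹ • S)⁻¹ := by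
      intro s
      rw [mul_inv_rev, inv_inv, mul_smul, hb, hinv]
    have hAB : A.card = B.card := by
      apply Finset.card_nbij' (fun s => b * s⁻¹) (fun s => b * s⁻¹)
      · intro s hs
        obtain ⟨hsS, hs⟩ := Finset.mem_filter.1 hs
        refine Finset.mem_filter.2 ⟨?_, ?_⟩
        · rw [← hs]
          exact Finset.mem_smul_finset.2 ⟨b, hbS, by simp [mul_comm]⟩
        · rw [hdiv, hs]
      · intro s hs
        obtain ⟨hsS, hs⟩ := Finset.mem_filter.1 hs
        have h1 : (b * s⁻¹)⁻¹ • S = S := by rw [hdiv, hs, inv_inv]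
        refine Finset.mem_filter.2 ⟨?_, h1⟩
        have h2 := hone_mem hm0
        rw [← h1, Finset.mem_smul_finset] at h2
        obtain ⟨y, hy, hy'⟩ := h2
        rw [smul_eq_mul, inv_mul_eq_one] at hy'
        change b * s⁻¹ ∈ S
        rwa [hy']
      · intro s _
        simp
      · intro s _
        simp
    rw [← hsum, hAB]
    exact ⟨_, rfl⟩
  · exfalso
    push Not at hB
    apply hne
    apply (Finset.eq_of_subset_of_card_le _ (by rw [Finset.card_inv])).symm
    intro x hx
    obtain ⟨s, hs, rfl⟩ := Finset.mem_inv.1 hx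
    have h1 : s⁻¹ • S = S := (key s hs).resolve_right (hB s hs)
    rw [← h1]
    refine Finset.mem_smul_finset.2 ⟨1, hone_mem ?_, by simp⟩
    rintro rfl
    simp [hS] at hs

/-! ### Fractional ideals and divisor classes -/

section Frac

variable {R : Type*} [CommRing R] [IsDomain R] {K : Type*} [Field K] [Algebra R K]
  [IsFractionRing R K]

/-- A nonzero finitely generated `R`-submodule of `K`, i.e. a nonzero fractional ideal
(over a Noetherian domain). -/
def IsFrac (I : Submodule R K) : Prop := I ≠ ⊥ ∧ I.FG

lemma IsFrac.exists_ne {I : Submodule R K} (h : IsFrac I) : ∃ a ∈ I, a ≠ 0 :=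
  (Submodule.ne_bot_iff _).1 h.1

lemma mem_one_div {I : Submodule R K} {x : K} :
    x ∈ 1 / I ↔ ∀ a ∈ I, x * a ∈ (1 : Submodule R K) := Submodule.mem_div_iff_forall_mul_mem

lemma IsFrac.mul {I J : Submodule R K} (hI : IsFrac I) (hJ : IsFrac J) : IsFrac (I * J) := by
  refine ⟨?_, hI.2.mul hJ.2⟩
  obtain ⟨a, ha, ha0⟩ := hI.exists_ne
  obtain ⟨b, hb, hb0⟩ := hJ.exists_ne
  exact (Submodule.ne_bot_iff _).2 ⟨a * b, Submodule.mul_mem_mul ha hb, mul_ne_zero ha0 hb0⟩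

lemma one_div_ne_bot {I : Submodule R K} (hI : I.FG) : (1 / I : Submodule R K) ≠ ⊥ := by
  obtain ⟨s, rfl⟩ := hI
  obtain ⟨⟨b, hb⟩, hInt⟩ := IsLocalization.exist_integer_multiples_of_finset (nonZeroDivisors R) s
  refine (Submodule.ne_bot_iff _).2 ⟨algebraMap R K b, ?_, ?_⟩
  · rw [mem_one_div]
    intro a ha
    induction ha using Submodule.span_induction with
    | mem x hx =>
      obtain ⟨r, hr⟩ := hInt x hx
      exact Submodule.mem_one.2 ⟨r, by rw [hr, Algebra.smul_def]⟩
    | zero => simp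
    | add x y _ _ hx hy => rw [mul_add]; exact add_mem hx hy
    | smul r x _ hx => rw [mul_smul_comm]; exact Submodule.smul_mem _ _ hx
  · exact IsFractionRing.to_map_ne_zero_of_mem_nonZeroDivisors hb

lemma IsFrac.one_div [IsNoetherianRing R] {I : Submodule R K} (hI : IsFrac I) :
    IsFrac (1 / I) := by
  refine ⟨one_div_ne_bot hI.2, ?_⟩
  obtain ⟨a, ha, ha0⟩ := hI.exists_ne
  -- multiplication by `a ∈ I` embeds `1 / I` into `R`
  have hmap : ((1 / I : Submodule R K).map (LinearMap.mulLeft R a)).FG := by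
    have hle : (1 / I : Submodule R K).map (LinearMap.mulLeft R a) ≤ 1 := by
      rintro _ ⟨y, hy, rfl⟩
      rw [LinearMap.mulLeft_apply, mul_comm]
      exact mem_one_div.1 hy a ha
    have hnoeth : IsNoetherian R (1 : Submodule R K) := by
      rw [Submodule.one_eq_range]
      infer_instance
    exact isNoetherian_submodule.1 hnoeth _ hle
  exact Submodule.fg_of_fg_map_injective _ (mul_right_injective₀ ha0) hmap

/-- Complete integral closedness of a normal domain. -/
lemma IsFrac.mem_one_of_mul_mem [IsIntegrallyClosed R] {I : Submodule R K} (hI : IsFrac I)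
    {x : K} (hx : ∀ a ∈ I, x * a ∈ I) : x ∈ (1 : Submodule R K) := by
  have hInt : IsIntegral R x := isIntegral_of_smul_mem_submodule I hI.1 hI.2 x hx
  exact Submodule.mem_one.2 (IsIntegrallyClosed.isIntegral_iff.1 hInt)

/-- An `R`-linear map between submodules of `K` is multiplication by an element of `K`. -/
lemma exists_mul_eq {I J : Submodule R K} (f : I →ₗ[R] J) :
    ∃ x : K, ∀ a : I, (f a : K) = x * a := by
  by_cases h : ∃ a : I, a ≠ 0
  · obtain ⟨a, ha⟩ := h
    have ha' : (a : K) ≠ 0 := by simpa using ha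
    refine ⟨f a / a, fun b => ?_⟩
    obtain ⟨p, q, hq, hpq⟩ := IsFractionRing.div_surjective (A := R) ((b : K) / a)
    have hq' : algebraMap R K q ≠ 0 := IsFractionRing.to_map_ne_zero_of_mem_nonZeroDivisors hq
    have h1 : q • b = p • a := by
      apply Subtype.ext
      simp only [Submodule.coe_smul, Algebra.smul_def]
      field_simp at hpq
      linear_combination -hpq
    have h2 : q • f b = p • f a := by rw [← map_smul, ← map_smul, h1]
    have h3 := congrArg Subtype.val h2
    simp only [Submodule.coe_smul, Algebra.smul_def] at h3
    field_simp at hpq ⊢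
    apply mul_left_cancel₀ hq'
    linear_combination a * h3 + (f a : K) * hpq
  · push Not at h
    exact ⟨0, fun a => by simp [h a]⟩

/-- `Hom_R(I, J)` is the colon module `J / I`. -/
lemma nonempty_hom_equiv {I J : Submodule R K} (hI : IsFrac I) :
    Nonempty ((I →ₗ[R] J) ≃ₗ[R] (J / I : Submodule R K)) := by
  obtain ⟨a, ha, ha0⟩ := hI.exists_ne
  let φ : (J / I : Submodule R K) →ₗ[R] (I →ₗ[R] J) :=
    LinearMap.mk₂ R (fun x y => ⟨(x : K) * y, Submodule.mem_div_iff_forall_mul_mem.1 x.2 _ y.2⟩)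
      (fun x x' y => by ext; simp [add_mul]) (fun r x y => by ext; simp)
      (fun x y y' => by ext; simp [mul_add]) (fun r x y => by ext; simp)
  refine ⟨(LinearEquiv.ofBijective φ ⟨?_, ?_⟩).symm⟩
  · intro x y hxy
    have := congrArg Subtype.val (LinearMap.congr_fun hxy ⟨a, ha⟩)
    exact Subtype.ext (mul_right_cancel₀ ha0 this)
  · intro f
    obtain ⟨x, hx⟩ := exists_mul_eq f
    refine ⟨⟨x, Submodule.mem_div_iff_forall_mul_mem.2 fun y hy => ?_⟩, ?_⟩
    · rw [← hx ⟨y, hy⟩]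
      exact (f _).2
    · ext y
      exact (hx y).symm

/-- `R` and `1 ⊆ K` are isomorphic, so `Hom_R(I, R)` is `1 / I`. -/
lemma nonempty_dual_equiv {I : Submodule R K} (hI : IsFrac I) :
    Nonempty (Module.Dual R I ≃ₗ[R] (1 / I : Submodule R K)) := by
  obtain ⟨e⟩ := nonempty_hom_equiv (J := 1) hI
  have e1 : R ≃ₗ[R] (1 : Submodule R K) := by
    rw [Submodule.one_eq_range]
    exact LinearEquiv.ofInjective _ (IsFractionRing.injective R K)
  exact ⟨(LinearEquiv.congrRight e1).trans e⟩

/-- A reflexive fractional ideal is divisorial. -/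
lemma IsFrac.one_div_one_div {I : Submodule R K} (hI : IsFrac I) [hr : Module.IsReflexive R I] :
    (1 / (1 / I) : Submodule R K) = I := by
  apply le_antisymm
  · intro x hx
    have hinj := IsFractionRing.injective R K
    have hmul : ∀ f : Module.Dual R I, ∃ t : K, ∀ a : I, algebraMap R K (f a) = t * a := by
      intro f
      obtain ⟨t, ht⟩ := exists_mul_eq
        (((Algebra.linearMap R K).codRestrict (1 : Submodule R K)
          (fun r => Submodule.mem_one.2 ⟨r, rfl⟩)).comp f)
      exact ⟨t, ht⟩
    choose t ht using hmul
    have htmem : ∀ f, t f ∈ (1 / I : Submodule R K) := fun f =>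
      mem_one_div.2 fun a ha => Submodule.mem_one.2 ⟨_, ht f ⟨a, ha⟩⟩
    obtain ⟨a, ha, ha0⟩ := hI.exists_ne
    choose r hr' using fun f => Submodule.mem_one.1 (mem_one_div.1 hx _ (htmem f))
    have htadd : ∀ f g, t (f + g) = t f + t g := by
      intro f g
      apply mul_right_cancel₀ ha0
      have h1 := ht (f + g) ⟨a, ha⟩
      rw [LinearMap.add_apply, map_add, ht, ht] at h1
      linear_combination -h1
    have htsmul : ∀ (c : R) f, t (c • f) = algebraMap R K c * t f := by
      intro c f
      apply mul_right_cancel₀ ha0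
      have h1 := ht (c • f) ⟨a, ha⟩
      rw [LinearMap.smul_apply, smul_eq_mul, map_mul, ht] at h1
      linear_combination -h1
    let φ : Module.Dual R (Module.Dual R I) :=
      { toFun := r
        map_add' := fun f g => hinj (by rw [map_add, hr', hr', hr', htadd]; ring)
        map_smul' := fun c f => hinj (by
          rw [RingHom.id_apply, smul_eq_mul, map_mul, hr', hr', htsmul]; ring) }
    obtain ⟨y, hy⟩ := (Module.bijective_dual_eval R I).2 φ
    -- a nonzero functional on `I`
    obtain ⟨s, hs, hs0⟩ := (Submodule.ne_bot_iff _).1 (one_div_ne_bot hI.2)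
    obtain ⟨f, hf0⟩ : ∃ f : Module.Dual R I, t f ≠ 0 := by
      by_contra! hall
      choose q hq using fun a : I => Submodule.mem_one.1 (mem_one_div.1 hs a a.2)
      let f : Module.Dual R I :=
        { toFun := q
          map_add' := fun u v => hinj (by rw [map_add, hq, hq, hq]; simp [mul_add])
          map_smul' := fun c u => hinj (by
            rw [RingHom.id_apply, smul_eq_mul, map_mul, hq, hq]
            simp [Algebra.smul_def]; ring) }
      have h1 : algebraMap R K (q ⟨a, ha⟩) = t f * a := ht f ⟨a, ha⟩
      rw [hq, hall f, zero_mul] at h1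
      exact mul_ne_zero hs0 ha0 h1
    have h2 : f y = r f := LinearMap.congr_fun hy f
    have h3 : x * t f = t f * y := by rw [← hr', ← ht, h2]
    have h4 : x = y := mul_right_cancel₀ hf0 (by rw [h3, mul_comm])
    rw [h4]
    exact y.2
  · intro x hx
    refine mem_one_div.2 fun y hy => ?_
    rw [mul_comm]
    exact mem_one_div.1 hy x hx

/-- The Artin congruence on submodules of `K`, taken modulo homotheties: `I ∼ J` if `1 / I` and
`1 / J` differ by a nonzero scalar of `K`. -/
def artinCon (R K : Type*) [CommRing R] [Field K] [Algebra R K] : Con (Submodule R K) where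
  r I J := ∃ x : K, x ≠ 0 ∧ ∀ y, y ∈ 1 / I ↔ x * y ∈ 1 / J
  iseqv :=
    { refl := fun I => ⟨1, one_ne_zero, fun y => by rw [one_mul]⟩
      symm := by
        rintro I J ⟨x, hx, h⟩
        exact ⟨x⁻¹, inv_ne_zero hx, fun y => by rw [h, mul_inv_cancel_left₀ hx]⟩
      trans := by
        rintro I J L ⟨x, hx, h⟩ ⟨x', hx', h'⟩
        exact ⟨x' * x, mul_ne_zero hx' hx, fun y => by rw [h, h', mul_assoc]⟩ }
  mul' := by
    have key : ∀ I J : Submodule R K, ∀ y, y ∈ 1 / (I * J) ↔ ∀ b ∈ J, y * b ∈ 1 / I := by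
      intro I J y
      simp only [Submodule.mem_div_iff_forall_mul_mem]
      constructor
      · intro h b hb a ha
        rw [mul_assoc, mul_comm b]
        exact h _ (Submodule.mul_mem_mul ha hb)
      · intro h z hz
        induction hz using Submodule.mul_induction_on' with
        | mem_mul_mem a ha b hb =>
          rw [mul_comm a, ← mul_assoc]
          exact h b hb a ha
        | add u _ v _ hu hv => rw [mul_add]; exact add_mem hu hv
    have step : ∀ I I' J : Submodule R K, (∃ x : K, x ≠ 0 ∧ ∀ y, y ∈ 1 / I ↔ x * y ∈ 1 / I') →
        ∃ x : K, x ≠ 0 ∧ ∀ y, y ∈ 1 / (I * J) ↔ x * y ∈ 1 / (I' * J) := by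
      rintro I I' J ⟨x, hx, h⟩
      refine ⟨x, hx, fun y => ?_⟩
      simp only [key, h, mul_assoc]
    rintro I I' J J' h h'
    obtain ⟨x, hx, h1⟩ := step I I' J h
    obtain ⟨x', hx', h2⟩ := step J J' I' h'
    rw [mul_comm J I', mul_comm J' I'] at h2
    exact ⟨x' * x, mul_ne_zero hx' hx, fun y => by rw [h1, h2, mul_assoc]⟩

/-- `J = x • I` for some nonzero scalar `x` of `K`. -/
def Proportional (I J : Submodule R K) : Prop := ∃ x : K, x ≠ 0 ∧ ∀ y, y ∈ I ↔ x * y ∈ J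

lemma Proportional.artinCon {I J : Submodule R K} (h : Proportional I J) : artinCon R K I J := by
  obtain ⟨x, hx, h⟩ := h
  refine ⟨x⁻¹, inv_ne_zero hx, fun y => ?_⟩
  rw [mem_one_div, mem_one_div]
  constructor
  · intro hy a ha
    have h1 : x⁻¹ * a ∈ I := by rwa [h, mul_inv_cancel_left₀ hx]
    have h2 := hy _ h1
    rwa [← mul_assoc, mul_comm y] at h2
  · intro hy a ha
    have h2 := hy _ ((h a).1 ha)
    have h3 : x⁻¹ * y * (x * a) = y * a := by field_simp
    rwa [h3] at h2

lemma Proportional.nonempty_equiv {I J : Submodule R K} (h : Proportional I J) :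
    Nonempty (I ≃ₗ[R] J) := by
  obtain ⟨x, hx, h⟩ := h
  refine ⟨LinearEquiv.ofBijective
    (((LinearMap.mulLeft R x).domRestrict I).codRestrict J fun y => (h y).1 y.2) ⟨?_, ?_⟩⟩
  · intro y z hyz
    exact Subtype.ext (mul_left_cancel₀ hx (congrArg Subtype.val hyz))
  · intro y
    refine ⟨⟨x⁻¹ * y, ?_⟩, ?_⟩
    · rw [h, mul_inv_cancel_left₀ hx]
      exact y.2
    · exact Subtype.ext (mul_inv_cancel_left₀ hx _)

lemma proportional_of_equiv {I J : Submodule R K} (hI : IsFrac I) (e : I ≃ₗ[R] J) :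
    Proportional I J := by
  obtain ⟨x, hx⟩ := exists_mul_eq e.toLinearMap
  obtain ⟨a, ha, ha0⟩ := hI.exists_ne
  have hx0 : x ≠ 0 := by
    rintro rfl
    have h1 : e ⟨a, ha⟩ = 0 := Subtype.ext (by simpa using hx ⟨a, ha⟩)
    exact ha0 (congrArg Subtype.val (e.map_eq_zero_iff.1 h1))
  refine ⟨x, hx0, fun y => ⟨fun hy => ?_, fun hy => ?_⟩⟩
  · rw [← hx ⟨y, hy⟩]
    exact (e _).2
  · have h1 := hx (e.symm ⟨_, hy⟩)
    simp only [LinearEquiv.coe_coe, LinearEquiv.apply_symm_apply] at h1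
    rw [mul_left_cancel₀ hx0 h1]
    exact (e.symm _).2

/-- Artin equivalence is proportionality on divisorial ideals. -/
lemma proportional_of_artinCon {I J : Submodule R K} (hI : (1 / (1 / I) : Submodule R K) = I)
    (hJ : (1 / (1 / J) : Submodule R K) = J) (h : artinCon R K I J) : Proportional I J := by
  obtain ⟨x, hx, h⟩ := h
  refine ⟨x⁻¹, inv_ne_zero hx, fun z => ?_⟩
  nth_rewrite 1 [← hI, ← hJ]
  rw [mem_one_div, mem_one_div]
  constructor
  · intro hz y hy
    have h1 : x⁻¹ * y ∈ 1 / I := by rwa [h, mul_inv_cancel_left₀ hx]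
    have h2 := hz _ h1
    rwa [mul_left_comm, ← mul_assoc] at h2
  · intro hz y hy
    have h2 := hz _ ((h y).1 hy)
    have h3 : x⁻¹ * z * (x * y) = z * y := by field_simp
    rwa [h3] at h2

lemma IsFrac.coe_mul_coe_one_div [IsNoetherianRing R] [IsIntegrallyClosed R]
    {I : Submodule R K} (hI : IsFrac I) :
    ((I : (artinCon R K).Quotient) * ((1 / I : Submodule R K) : (artinCon R K).Quotient)) = 1 := by
  rw [← Con.coe_mul, ← Con.coe_one, Con.eq]
  refine ⟨1, one_ne_zero, fun y => ?_⟩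
  rw [one_mul, mem_one_div]
  constructor
  · intro h
    have h1 : y ∈ (1 : Submodule R K) := by
      apply hI.one_div.mem_one_of_mul_mem
      intro a ha
      refine mem_one_div.2 fun b hb => ?_
      rw [mul_assoc, mul_comm a]
      exact h _ (Submodule.mul_mem_mul hb ha)
    refine mem_one_div.2 fun b hb => ?_
    have := Submodule.mul_mem_mul h1 hb
    rwa [one_mul] at this
  · intro hy a ha
    have h1 : y ∈ (1 : Submodule R K) := by
      simpa using mem_one_div.1 hy 1 (Submodule.mem_one.2 ⟨1, map_one _⟩)
    have := Submodule.mul_mem_mul h1 (Submodule.mul_one_div_le_one ha)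
    rwa [one_mul] at this

variable [IsNoetherianRing R] [IsIntegrallyClosed R]

/-- The monoid of Artin classes of submodules of `K` modulo homothety. -/
def ArtinClass (R K : Type*) [CommRing R] [Field K] [Algebra R K] : Type _ :=
  (artinCon R K).Quotient

instance (R K : Type*) [CommRing R] [Field K] [Algebra R K] : CommMonoid (ArtinClass R K) :=
  inferInstanceAs (CommMonoid (artinCon R K).Quotient)

/-- The class of a nonzero fractional ideal in the divisor class group of `R`, the latter being
realised as the units of `ArtinClass R K`. -/
def IsFrac.cls {I : Submodule R K} (hI : IsFrac I) : (ArtinClass R K)ˣ where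
  val := (I : (artinCon R K).Quotient)
  inv := ((1 / I : Submodule R K) : (artinCon R K).Quotient)
  val_inv := hI.coe_mul_coe_one_div
  inv_val := (mul_comm (G := (artinCon R K).Quotient) _ _).trans hI.coe_mul_coe_one_div

lemma IsFrac.cls_eq_iff {I J : Submodule R K} (hI : IsFrac I) (hJ : IsFrac J) :
    hI.cls = hJ.cls ↔ artinCon R K I J := by
  rw [Units.ext_iff]
  exact Con.eq _

lemma IsFrac.cls_one_div {I : Submodule R K} (hI : IsFrac I) : hI.one_div.cls = hI.cls⁻¹ :=
  Units.ext rfl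

lemma IsFrac.cls_mul {I J : Submodule R K} (hI : IsFrac I) (hJ : IsFrac J) :
    (hI.mul hJ).cls = hI.cls * hJ.cls := Units.ext rfl

/-- `J / I = 1 / ((1 / J) I)` for `J` divisorial. -/
lemma div_eq_one_div {I J : Submodule R K} (hJ : (1 / (1 / J) : Submodule R K) = J) :
    J / I = 1 / ((1 / J) * I) := by
  apply le_antisymm
  · rw [Submodule.le_div_iff_mul_le, mul_left_comm]
    calc (1 / J) * (J / I * I) ≤ (1 / J) * J :=
          mul_le_mul' le_rfl (Submodule.le_div_iff_mul_le.1 le_rfl)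
      _ ≤ 1 := by rw [mul_comm]; exact Submodule.mul_one_div_le_one
  · rw [Submodule.le_div_iff_mul_le]
    nth_rewrite 2 [← hJ]
    rw [Submodule.le_div_iff_mul_le, mul_assoc, mul_comm I]
    exact Submodule.le_div_iff_mul_le.1 le_rfl

lemma IsFrac.div {I J : Submodule R K} (hI : IsFrac I) (hJ : IsFrac J)
    (hJ' : (1 / (1 / J) : Submodule R K) = J) : IsFrac (J / I) := by
  rw [div_eq_one_div hJ']
  exact (hJ.one_div.mul hI).one_div

lemma IsFrac.cls_div {I J : Submodule R K} (hI : IsFrac I) (hJ : IsFrac J)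
    (hJ' : (1 / (1 / J) : Submodule R K) = J) :
    (hI.div hJ hJ').cls = hJ.cls * hI.cls⁻¹ := by
  have h1 : (hI.div hJ hJ').cls = (hJ.one_div.mul hI).one_div.cls := by
    rw [IsFrac.cls_eq_iff, div_eq_one_div hJ']
    exact (artinCon R K).refl _
  rw [h1, cls_one_div (hJ.one_div.mul hI), cls_mul hJ.one_div hI, cls_one_div hJ, mul_inv_rev, inv_inv, mul_comm]

/-- The exchange property: since fractional ideals have the local ring `R` as endomorphism ring,
a summand of `⊕ B k` which is a fractional ideal is isomorphic to some `B k`. -/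
lemma exists_proportional [IsLocalRing R] {ι κ : Type*} [Finite ι] [Finite κ]
    {A : ι → Submodule R K} {B : κ → Submodule R K} (hA : ∀ i, IsFrac (A i))
    (e : (∀ i, A i) ≃ₗ[R] (∀ k, B k)) (i : ι) : ∃ k, Proportional (A i) (B k) := by
  classical
  cases nonempty_fintype κ
  obtain ⟨a, ha, ha0⟩ := (hA i).exists_ne
  choose x hx using fun k => exists_mul_eq
    ((LinearMap.proj k).comp (e.toLinearMap.comp (LinearMap.single R (fun i => A i) i)))
  choose y hy using fun k => exists_mul_eq
    ((LinearMap.proj i).comp (e.symm.toLinearMap.comp (LinearMap.single R (fun k => B k) k)))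
  simp only [LinearMap.comp_apply, LinearMap.proj_apply, LinearMap.single_apply,
    LinearEquiv.coe_coe] at hx hy
  -- the composite `A i → B k → A i` is multiplication by an element of `R`
  have hmem : ∀ k, y k * x k ∈ (1 : Submodule R K) := by
    intro k
    refine (hA i).mem_one_of_mul_mem fun b hb => ?_
    rw [mul_assoc, ← hx k ⟨b, hb⟩, ← hy]
    exact Subtype.property _
  choose r hr using fun k => Submodule.mem_one.1 (hmem k)
  have hsum : ∑ k, r k = 1 := by
    apply IsFractionRing.injective R K
    apply mul_right_cancel₀ ha0
    have h1 : ∑ k, (e.symm (Pi.single k (e (Pi.single i ⟨a, ha⟩) k)) i : A i) = ⟨a, ha⟩ := by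
      rw [← Finset.sum_apply, ← map_sum, Finset.univ_sum_single, LinearEquiv.symm_apply_apply,
        Pi.single_eq_same]
    have h2 : _ = a := congrArg Subtype.val h1
    rw [AddSubmonoidClass.coe_finsetSum] at h2
    rw [map_sum, map_one, one_mul, Finset.sum_mul]
    refine Eq.trans ?_ h2
    refine Finset.sum_congr rfl fun k _ => ?_
    rw [hr, hy, hx, mul_assoc]
  obtain ⟨k, hk⟩ : ∃ k, IsUnit (r k) := by
    by_contra! hall
    have : ∑ k, r k ∈ IsLocalRing.maximalIdeal R :=
      Ideal.sum_mem _ fun k _ => (IsLocalRing.mem_maximalIdeal _).2 (hall k)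
    rw [hsum] at this
    exact (Ideal.ne_top_iff_one _).1 (IsLocalRing.maximalIdeal.isMaximal R).ne_top this
  obtain ⟨u, hu⟩ := hk
  have hxy : y k * x k ≠ 0 := by
    rw [← hr, ← hu]
    exact (u.isUnit.map (algebraMap R K)).ne_zero
  refine ⟨k, x k, right_ne_zero_of_mul hxy, fun z => ⟨fun hz => ?_, fun hz => ?_⟩⟩
  · rw [← hx k ⟨z, hz⟩]
    exact Subtype.property _
  · -- `(y k * x k) * z ∈ A i` and `y k * x k` is a unit of `R`
    have h1 : y k * (x k * z) ∈ A i := by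
      rw [← hy k ⟨_, hz⟩]
      exact Subtype.property _
    rw [← mul_assoc, ← hr, ← hu, ← Algebra.smul_def] at h1
    have h2 := (A i).smul_mem (↑u⁻¹ : R) h1
    rwa [smul_smul, Units.inv_mul, one_smul] at h2

end Frac

/-! ### Rank -/

section Rank
variable {R : Type u} [CommRing R] [IsDomain R] [IsNoetherianRing R]

/-- Over a domain the rank of `Hom` is multiplicative. -/
lemma finrank_hom_s9 {M N : Type u} [AddCommGroup M] [Module R M] [AddCommGroup N] [Module R N]
    [Module.Finite R M] [Module.Finite R N] :
    finrank R (M →ₗ[R] N) = finrank R M * finrank R N := by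
  have : Module.FinitePresentation R M := Module.finitePresentation_of_finite R M
  let S := nonZeroDivisors R
  let K := FractionRing R
  let f := LocalizedModule.mkLinearMap S M
  let g := LocalizedModule.mkLinearMap S N
  have h1 := IsLocalizedModule.finrank_eq S
    (IsLocalizedModule.mapExtendScalars S f g (Localization S)) le_rfl
  have h2 := IsLocalizedModule.finrank_eq S f le_rfl
  have h3 := IsLocalizedModule.finrank_eq S g le_rfl
  rw [← h1, ← h2, ← h3]
  have e1 := IsLocalization.finrank_eq (R := R) (N := LocalizedModule S M) (Localization S) S le_rfl
  have e2 := IsLocalization.finrank_eq (R := R) (N := LocalizedModule S N) (Localization S) S le_rfl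
  have e3 := IsLocalization.finrank_eq (R := R)
    (N := LocalizedModule S M →ₗ[Localization S] LocalizedModule S N) (Localization S) S le_rfl
  rw [← e1, ← e2, ← e3]
  let _ : Field (Localization S) := inferInstanceAs (Field (FractionRing R))
  have : Module.Finite (Localization S) (LocalizedModule S M) :=
    Module.Finite.of_isLocalizedModule S f
  have : Module.Finite (Localization S) (LocalizedModule S N) :=
    Module.Finite.of_isLocalizedModule S g
  exact Module.finrank_linearMap _ _ _ _

/-- A torsion-free module of rank one is isomorphic to a fractional ideal. -/
lemma exists_embedding {M : Type u} [AddCommGroup M] [Module R M] [Module.Finite R M]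
    [Module.IsTorsionFree R M] (h : finrank R M = 1) :
    ∃ I : Submodule R (FractionRing R), (I ≠ ⊥ ∧ I.FG) ∧ Nonempty (M ≃ₗ[R] I) := by
  let S := nonZeroDivisors R
  let f := LocalizedModule.mkLinearMap S M
  have h2 := IsLocalizedModule.finrank_eq S f le_rfl
  have e1 := IsLocalization.finrank_eq (R := R) (N := LocalizedModule S M) (FractionRing R) S le_rfl
  have e : LocalizedModule S M ≃ₗ[FractionRing R] FractionRing R :=
    LinearEquiv.ofFinrankEq _ _ (by rw [e1, h2, h, Module.finrank_self])
  let g : M →ₗ[R] FractionRing R := (e.restrictScalars R).toLinearMap.comp f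
  have hg : Function.Injective g := by
    apply e.injective.comp
    rw [← LinearMap.ker_eq_bot, eq_bot_iff]
    intro x hx
    obtain ⟨c, hc⟩ := (IsLocalizedModule.eq_zero_iff S f).1 hx
    exact (smul_eq_zero_iff_right (nonZeroDivisors.ne_zero c.2)).1 hc
  refine ⟨LinearMap.range g, ⟨?_, ?_⟩, ⟨LinearEquiv.ofInjective g hg⟩⟩
  · have : Nontrivial M := by
      by_contra hn
      rw [not_nontrivial_iff_subsingleton] at hn
      rw [Module.finrank_zero_of_subsingleton] at h
      exact zero_ne_one h
    obtain ⟨x, hx⟩ := exists_ne (0 : M)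
    refine (Submodule.ne_bot_iff _).2 ⟨g x, ⟨x, rfl⟩, ?_⟩
    rwa [Ne, map_eq_zero_iff g hg]
  · rw [LinearMap.range_eq_map]
    exact Module.Finite.fg_top.map _

end Rank

/-! ### Products of modules -/

section Hom

variable {R : Type*} [CommRing R]

/-- `Hom` out of a fixed module commutes with products. -/
def homPiEquiv {ι : Type*} (X : Type*) (M : ι → Type*) [AddCommGroup X] [Module R X]
    [∀ i, AddCommGroup (M i)] [∀ i, Module R (M i)] :
    (X →ₗ[R] ∀ j, M j) ≃ₗ[R] ∀ j, X →ₗ[R] M j where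
  toFun f j := (LinearMap.proj j).comp f
  invFun g := LinearMap.pi g
  map_add' _ _ := rfl
  map_smul' _ _ := rfl
  left_inv _ := rfl
  right_inv _ := rfl

/-- If `M` is a generator isomorphic to `M^*`, and `M = ⊕ M i` satisfies `Hom(M i, M) ≅ M` or
`M^*` for all `i`, then `M` is steady, as `End(M) ≅ ⊕ Hom(M i, M)`. -/
lemma isSteadyModule_of_equiv_dual {R : Type u} [CommRing R] {m : ℕ} {M : Fin m → Type u}
    [∀ i, AddCommGroup (M i)] [∀ i, Module R (M i)] (hgen : IsGeneratorModule R (∀ i, M i))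
    (hiso : ∀ i, Nonempty ((M i →ₗ[R] ∀ j, M j) ≃ₗ[R] (∀ j, M j)) ∨
      Nonempty ((M i →ₗ[R] ∀ j, M j) ≃ₗ[R] Module.Dual R (∀ j, M j)))
    (e : (∀ j, M j) ≃ₗ[R] Module.Dual R (∀ j, M j)) : IsSteadyModule R (∀ i, M i) := by
  refine ⟨hgen, m, ModuleCat.of R PUnit, ?_⟩
  have h : ∀ i, Nonempty ((M i →ₗ[R] ∀ j, M j) ≃ₗ[R] (∀ j, M j)) := fun i =>
    (hiso i).elim id fun ⟨e'⟩ => ⟨e'.trans e.symm⟩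
  have e1 : Module.End R (∀ i, M i) ≃ₗ[R] (Fin m → ∀ j, M j) :=
    (LinearMap.lsum R M R).symm.trans (LinearEquiv.piCongrRight fun i => (h i).some)
  exact ⟨LinearEquiv.prodUnique.trans e1⟩

end Hom

/-! ### The parity of the number of summands -/

/-- Let `R` be a complete Noetherian local normal domain and let
`M = ⊕_{i=0}^n M i` be a basic finitely generated reflexive semi-steady `R`-module that
is not steady, such that for every `i` the module `Hom_R(M i, M)` is isomorphic either
to `M` or to `M^*`. Then `n + 1`, the number of indecomposable direct summands of `M`,
is an even number. -/
theorem even_number_of_summands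
    (R : Type u) [CommRing R] [IsNoetherianRing R] [IsDomain R] [IsIntegrallyClosed R]
    [IsLocalRing R] [IsAdicComplete (IsLocalRing.maximalIdeal R) R]
    (n : ℕ) (M : Fin (n + 1) → Type u) [∀ i, AddCommGroup (M i)] [∀ i, Module R (M i)]
    [∀ i, Module.Finite R (M i)]
    (hrefl : Module.IsReflexive R (∀ i, M i))
    (hind : ∀ i, IsIndecomposableModule R (M i))
    (hbasic : ∀ i j, i ≠ j → ¬ Nonempty (M i ≃ₗ[R] M j))
    (hss : IsSemiSteadyFamily R M)
    (hnotsteady : ¬ IsSteadyModule R (∀ i, M i))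
    (hiso : ∀ i, Nonempty ((M i →ₗ[R] ∀ j, M j) ≃ₗ[R] (∀ j, M j)) ∨
      Nonempty ((M i →ₗ[R] ∀ j, M j) ≃ₗ[R] Module.Dual R (∀ j, M j))) :
    Even (n + 1) := by
  have hprefl : ∀ i, Module.IsReflexive R (M i) := fun i =>
    Module.IsReflexive.of_split (LinearMap.single R M i) (LinearMap.proj i)
      (by ext x; simp)
  have hnt : ∀ i, Nontrivial (M i) := fun i => (hind i).1
  -- comparing ranks, `rk (M i) * rk M = rk M`
  have hrank : ∀ i, finrank R (M i) = 1 := by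
    intro i
    have hpos : 0 < finrank R (∀ j, M j) := Module.finrank_pos
    have h1 : finrank R (M i) * finrank R (∀ j, M j) = finrank R (∀ j, M j) := by
      rw [← finrank_hom_s9]
      rcases hiso i with ⟨⟨e⟩⟩ | ⟨⟨e⟩⟩
      · exact e.finrank_eq
      · rw [e.finrank_eq]
        exact finrank_hom_s9.trans (by rw [Module.finrank_self, mul_one])
    exact Nat.eq_of_mul_eq_mul_right hpos (by rw [h1, one_mul])
  choose I hI e using fun i => exists_embedding (hrank i)
  replace e : ∀ i, M i ≃ₗ[R] I i := fun i => (e i).some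
  replace hI : ∀ i, IsFrac (I i) := hI
  have hdiv : ∀ i, (1 / (1 / I i) : Submodule R (FractionRing R)) = I i := fun i => by
    have : Module.IsReflexive R (I i) := Module.equiv (e i)
    exact (hI i).one_div_one_div
  let c := fun i => (hI i).cls
  have eM : (∀ j, M j) ≃ₗ[R] ∀ j, I j := LinearEquiv.piCongrRight e
  have eD : Module.Dual R (∀ j, M j) ≃ₗ[R] ∀ j, (1 / I j : Submodule R (FractionRing R)) :=
    (LinearMap.lsum R M R).symm.trans (LinearEquiv.piCongrRight fun j =>
      (e j).dualMap.symm.trans (nonempty_dual_equiv (hI j)).some)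
  have eH : ∀ i, (M i →ₗ[R] ∀ j, M j) ≃ₗ[R]
      ∀ j, (I j / I i : Submodule R (FractionRing R)) := fun i =>
    (homPiEquiv (M i) M).trans (LinearEquiv.piCongrRight fun j =>
      (LinearEquiv.arrowCongr (e i) (e j)).trans (nonempty_hom_equiv (hI i)).some)
  have hH : ∀ i j, IsFrac (I j / I i) := fun i j => (hI i).div (hI j) (hdiv j)
  have hcinj : Function.Injective c := by
    intro i j hij
    by_contra hne
    obtain ⟨e'⟩ := (proportional_of_artinCon (hdiv i) (hdiv j)
      ((IsFrac.cls_eq_iff _ _).1 hij)).nonempty_equiv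
    exact hbasic i j hne ⟨(e i).trans (e'.trans (e j).symm)⟩
  refine even_card_of_translates c hcinj (fun i => ?_) (fun hall => ?_)
  · rcases hiso i with ⟨⟨e'⟩⟩ | ⟨⟨e'⟩⟩
    · refine Or.inl fun j => ?_
      obtain ⟨k, hk⟩ := exists_proportional (hH i) ((eH i).symm.trans (e'.trans eM)) j
      refine ⟨k, ?_⟩
      rw [← IsFrac.cls_div (hI i) (hI j) (hdiv j)]
      exact (IsFrac.cls_eq_iff _ _).2 hk.artinCon
    · refine Or.inr fun j => ?_
      obtain ⟨k, hk⟩ := exists_proportional (hH i) ((eH i).symm.trans (e'.trans eD)) j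
      refine ⟨k, ?_⟩
      rw [← IsFrac.cls_div (hI i) (hI j) (hdiv j), ← IsFrac.cls_one_div]
      exact (IsFrac.cls_eq_iff _ _).2 hk.artinCon
  · -- if the set of classes is symmetric then `M ≅ M^*`
    apply hnotsteady
    choose τ hτ using hall
    have hτinj : Function.Injective τ := fun i j hij =>
      hcinj (inv_injective (by rw [hτ, hτ, hij]))
    let σ : Fin (n + 1) ≃ Fin (n + 1) := Equiv.ofBijective τ (Finite.injective_iff_bijective.1 hτinj)
    have hdual : ∀ j, Nonempty ((1 / I j : Submodule R (FractionRing R)) ≃ₗ[R] I (σ j)) := by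
      intro j
      apply Proportional.nonempty_equiv
      apply proportional_of_artinCon _ (hdiv _)
      · rw [← IsFrac.cls_eq_iff (hI j).one_div (hI _), IsFrac.cls_one_div]
        exact hτ j
      · rw [hdiv]
    have e1 : (∀ j, (1 / I j : Submodule R (FractionRing R))) ≃ₗ[R] ∀ j, I (σ j) :=
      LinearEquiv.piCongrRight fun j => (hdual j).some
    have e2 : (∀ j, I (σ j)) ≃ₗ[R] ∀ j, I j :=
      LinearEquiv.piCongrLeft R (fun j => I j) σ
    exact isSteadyModule_of_equiv_dual hss.1 hiso
      (eM.trans (e2.symm.trans (e1.symm.trans eD.symm)))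
end
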